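/- arXiv:2603.21671 — 6 statements merged into one kernel-verified Lean document; each statement's English description precedes it below -/
import Mathlib

section
/- Let f : ℝ^d → ℝ be a convex function. Then for every vector v ∈ ℝ^d and every nonnegative smooth compactly supported function φ : ℝ^d → ℝ, one has ∫_{ℝ^d} f(x) · ⟨v, (D²φ(x)) v⟩ dx ≥ 0, where D²φ(x) is the Hessian matrix of φ at x. In particular the distributional Laplacian of f is nonnegative: ∫_{ℝ^d} f(x) Δφ(x) dx ≥ 0 for all nonnegative φ ∈ C_c^∞(ℝ^d). -/
open MeasureTheory Filter Metric
open scoped Topology ENNReal NNReal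

/-- The second partial derivative `∂_i ∂_j φ` at `x`. -/
noncomputable def secondPartial (d : ℕ) (φ : EuclideanSpace ℝ (Fin d) → ℝ)
    (i j : Fin d) (x : EuclideanSpace ℝ (Fin d)) : ℝ :=
  fderiv ℝ (fun z => fderiv ℝ φ z (EuclideanSpace.single j 1)) x (EuclideanSpace.single i 1)

lemma aux_hasDerivAt {d : ℕ} (f φ : EuclideanSpace ℝ (Fin d) → ℝ) (hf : Continuous f)
    (hφ : ContDiff ℝ 1 φ) (hc : HasCompactSupport φ) (v : EuclideanSpace ℝ (Fin d)) (s : ℝ) :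
    HasDerivAt (fun s : ℝ => ∫ x, f x * φ (x + s • v))
      (∫ x, f x * fderiv ℝ φ (x + s • v) v) s := by
  have hli : LocallyIntegrable (fun x => f (-x)) (volume : Measure (EuclideanSpace ℝ (Fin d))) :=
    (hf.comp continuous_neg).locallyIntegrable
  have h1 := hc.hasFDerivAt_convolution_right (ContinuousLinearMap.lsmul ℝ ℝ) hli hφ (s • v)
  have h2 : HasDerivAt (fun s : ℝ => s • v) v s := by
    simpa using (hasDerivAt_id s).smul_const v
  have h3 := h1.comp_hasDerivAt s h2
  rw [convolution_precompR_apply _ hli (hc.fderiv ℝ) (hφ.continuous_fderiv one_ne_zero)] at h3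
  have key : ∀ (g : EuclideanSpace ℝ (Fin d) → ℝ) (s : ℝ),
      convolution (fun x => f (-x)) g (ContinuousLinearMap.lsmul ℝ ℝ) volume (s • v)
        = ∫ x, f x * g (x + s • v) := by
    intro g s
    rw [convolution_def, ← integral_neg_eq_self]
    congr 1
    ext x
    simp [add_comm]
  rw [key] at h3
  have e : (fun s : ℝ => ∫ x, f x * φ (x + s • v)) =
      (convolution (fun x => f (-x)) φ (ContinuousLinearMap.lsmul ℝ ℝ) volume) ∘
        (fun s : ℝ => s • v) := funext fun s => (key φ s).symm
  rw [e]
  exact h3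

lemma aux_int {d : ℕ} (f φ : EuclideanSpace ℝ (Fin d) → ℝ) (hf : Continuous f)
    (hφ : Continuous φ) (hc : HasCompactSupport φ) : Integrable (fun x => f x * φ x) :=
  (hf.mul hφ).integrable_of_hasCompactSupport hc.mul_left

lemma aux_convex {d : ℕ} (f φ : EuclideanSpace ℝ (Fin d) → ℝ) (hf : ConvexOn ℝ Set.univ f)
    (hfc : Continuous f)
    (hφ : Continuous φ) (hc : HasCompactSupport φ) (h0 : ∀ x, 0 ≤ φ x)
    (v : EuclideanSpace ℝ (Fin d)) :
    ConvexOn ℝ Set.univ (fun s : ℝ => ∫ x, f x * φ (x + s • v)) := by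
  have key : ∀ s : ℝ, ∫ x, f x * φ (x + s • v) = ∫ x, f (x - s • v) * φ x := by
    intro s
    rw [← integral_add_right_eq_self (fun x => f (x - s • v) * φ x) (s • v)]
    simp
  have hi : ∀ s : ℝ, Integrable (fun x => f (x - s • v) * φ x) := fun s =>
    aux_int (fun x => f (x - s • v)) φ (hfc.comp (by fun_prop)) hφ hc
  refine ⟨convex_univ, ?_⟩
  intro s _ t _ a b ha hb hab
  simp only [key, smul_eq_mul]
  rw [← integral_const_mul, ← integral_const_mul,
    ← integral_add ((hi s).const_mul a) ((hi t).const_mul b)]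
  refine integral_mono (hi _) (((hi s).const_mul a).add ((hi t).const_mul b)) ?_
  intro x
  have h := hf.2 (Set.mem_univ (x - s • v)) (Set.mem_univ (x - t • v)) ha hb hab
  have e : a • (x - s • v) + b • (x - t • v) = x - (a * s + b * t) • v := by
    have : x = (a + b) • x := by rw [hab, one_smul]
    nth_rewrite 3 [this]
    module
  rw [e] at h
  have := mul_le_mul_of_nonneg_right h (h0 x)
  simp only [smul_eq_mul] at this
  simp only
  linarith

lemma aux_main {d : ℕ} (f φ : EuclideanSpace ℝ (Fin d) → ℝ) (hf : ConvexOn ℝ Set.univ f)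
    (hφ : ContDiff ℝ (⊤ : ℕ∞) φ) (hc : HasCompactSupport φ) (h0 : ∀ x, 0 ≤ φ x)
    (v : EuclideanSpace ℝ (Fin d)) :
    0 ≤ ∫ x, f x * fderiv ℝ (fun z => fderiv ℝ φ z v) x v := by
  have hfc : Continuous f := hf.locallyLipschitz.continuous
  have hψ : ContDiff ℝ 1 (fun z => fderiv ℝ φ z v) :=
    (hφ.fderiv_right (m := 1) (by norm_cast)).clm_apply contDiff_const
  have hψc : HasCompactSupport (fun z => fderiv ℝ φ z v) := hc.fderiv_apply ℝ v
  have hφ1 : ContDiff ℝ 1 φ := hφ.of_le (by norm_cast)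
  have d1 := aux_hasDerivAt f φ hfc hφ1 hc v
  have d2 := aux_hasDerivAt f _ hfc hψ hψc v 0
  have hm := (aux_convex f φ hf hfc hφ.continuous hc h0 v).monotoneOn_deriv
    (fun s _ => (d1 s).differentiableAt)
  rw [monotoneOn_univ] at hm
  have e : deriv (fun s : ℝ => ∫ x, f x * φ (x + s • v))
      = fun s => ∫ x, f x * fderiv ℝ φ (x + s • v) v := funext fun s => (d1 s).deriv
  rw [e] at hm
  have := d2.nonneg_of_monotone hm
  simpa using this

/-- For a convex `f`, the distributional second derivative in any direction `v`,
namely `∫ f(x) ⟨v, D²φ(x) v⟩ dx`, is nonnegative for nonnegative test functions `φ`;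
in particular the distributional Laplacian of `f` is nonnegative. -/
theorem convex_distributional_hessian_nonneg (d : ℕ)
    (f : EuclideanSpace ℝ (Fin d) → ℝ) (hf : ConvexOn ℝ Set.univ f) :
    (∀ (v : EuclideanSpace ℝ (Fin d)) (φ : EuclideanSpace ℝ (Fin d) → ℝ),
        ContDiff ℝ (⊤ : ℕ∞) φ → HasCompactSupport φ → (∀ x, 0 ≤ φ x) →
        0 ≤ ∫ x, f x * fderiv ℝ (fun z => fderiv ℝ φ z v) x v) ∧
    (∀ φ : EuclideanSpace ℝ (Fin d) → ℝ,
        ContDiff ℝ (⊤ : ℕ∞) φ → HasCompactSupport φ → (∀ x, 0 ≤ φ x) →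
        0 ≤ ∫ x, f x * ∑ i, secondPartial d φ i i x) := by
  refine ⟨fun v φ hφ hc h0 => aux_main f φ hf hφ hc h0 v, fun φ hφ hc h0 => ?_⟩
  have hfc : Continuous f := hf.locallyLipschitz.continuous
  simp only [Finset.mul_sum, secondPartial]
  rw [integral_finsetSum]
  · exact Finset.sum_nonneg fun i _ => aux_main f φ hf hφ hc h0 _
  · intro i _
    have hψ : ContDiff ℝ 1 (fun z => fderiv ℝ φ z (EuclideanSpace.single i 1)) :=
      (hφ.fderiv_right (m := 1) (by norm_cast)).clm_apply contDiff_const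
    have hψc : HasCompactSupport (fun z => fderiv ℝ φ z (EuclideanSpace.single i 1)) :=
      hc.fderiv_apply ℝ _
    exact aux_int f _ hfc ((hψ.continuous_fderiv one_ne_zero).clm_apply continuous_const)
      (hψc.fderiv_apply ℝ _)
end

section
/- Let f : ℝ^d → ℝ be a convex function of at most linear growth (|f(y)| ≤ A‖y‖ + B for all y). Let ν be the nonnegative locally finite Borel measure on ℝ^d with ∫ φ dν = (1/2) ∫_{ℝ^d} f(x) Δφ(x) dx for all φ ∈ C_c^∞(ℝ^d) (half the distributional Laplacian of f). For t > 0 let φ_t(y) = (2πt)^{−d/2} exp(−‖y‖²/(2t)) be the Gaussian heat kernel and (P_s h)(y) = ∫_{ℝ^d} h(y + z) φ_s(z) dz the heat semigroup. Then for every twice continuously differentiable compactly supported h : ℝ^d → ℝ and every t > 0: ∫_{ℝ^d} h(x) ((P_t f)(x) − f(x)) dx = ∫_0^t ∫_{ℝ^d} (P_s h)(y) ν(dy) ds. -/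
open MeasureTheory Filter Metric
open scoped Topology ENNReal NNReal

/-- The `d`-dimensional Gaussian heat kernel `φ_t`. -/
noncomputable def heatKernel (d : ℕ) (t : ℝ) (y : EuclideanSpace ℝ (Fin d)) : ℝ :=
  (2 * Real.pi * t) ^ (-(d : ℝ) / 2) * Real.exp (-‖y‖ ^ 2 / (2 * t))

/-- The heat semigroup `(P_s h)(y) = ∫ h (y + z) φ_s(z) dz`. -/
noncomputable def heatSemigroup (d : ℕ) (s : ℝ) (h : EuclideanSpace ℝ (Fin d) → ℝ)
    (y : EuclideanSpace ℝ (Fin d)) : ℝ :=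
  ∫ z, h (y + z) * heatKernel d s z

/-- The Laplacian `Δφ` at `x`. -/
noncomputable def laplacian (d : ℕ) (φ : EuclideanSpace ℝ (Fin d) → ℝ)
    (x : EuclideanSpace ℝ (Fin d)) : ℝ :=
  ∑ i, secondPartial d φ i i x

open scoped Convolution

noncomputable def cv (d : ℕ) (k h : EuclideanSpace ℝ (Fin d) → ℝ) : EuclideanSpace ℝ (Fin d) → ℝ :=
  MeasureTheory.convolution k h (ContinuousLinearMap.lsmul ℝ ℝ) volume

noncomputable def pd (d : ℕ) (i : Fin d) (h : EuclideanSpace ℝ (Fin d) → ℝ) :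
    EuclideanSpace ℝ (Fin d) → ℝ := fun x => fderiv ℝ h x (EuclideanSpace.single i 1)

lemma laplacian_eq (d : ℕ) (h : EuclideanSpace ℝ (Fin d) → ℝ) (x) :
    laplacian d h x = ∑ i, pd d i (pd d i h) x := rfl

lemma cv_apply (d : ℕ) (k h : EuclideanSpace ℝ (Fin d) → ℝ) (x) :
    cv d k h x = ∫ y, k y * h (x - y) := rfl

lemma cv_apply' (d : ℕ) (k h : EuclideanSpace ℝ (Fin d) → ℝ) (x) :
    cv d k h x = ∫ y, k (x - y) * h y := by
  rw [cv_apply, ← integral_sub_left_eq_self _ volume x]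
  simp

lemma pd_compact {d : ℕ} {h : EuclideanSpace ℝ (Fin d) → ℝ} (hs : HasCompactSupport h) (i) :
    HasCompactSupport (pd d i h) := hs.fderiv_apply ℝ _

lemma pd_contDiff {d : ℕ} {h : EuclideanSpace ℝ (Fin d) → ℝ} {n m : WithTop ℕ∞}
    (hh : ContDiff ℝ n h) (hm : m + 1 ≤ n) (i) :
    ContDiff ℝ m (pd d i h) := (hh.fderiv_right hm).clm_apply contDiff_const

lemma lap_compact {d : ℕ} {h : EuclideanSpace ℝ (Fin d) → ℝ} (hs : HasCompactSupport h) :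
    HasCompactSupport (laplacian d h) := by
  have : laplacian d h = fun x => ∑ i, pd d i (pd d i h) x := rfl
  rw [this]
  have H : ∀ s : Finset (Fin d), HasCompactSupport (fun x => ∑ i ∈ s, pd d i (pd d i h) x) := by
    intro s
    classical
    induction s using Finset.induction_on with
    | empty => simpa using! (HasCompactSupport.zero (α := EuclideanSpace ℝ (Fin d)) (β := ℝ))
    | insert a s ha ih =>
      simp only [Finset.sum_insert ha]
      exact (pd_compact (pd_compact hs a) a).add ih
  exact H _

lemma lap_cont {d : ℕ} {h : EuclideanSpace ℝ (Fin d) → ℝ} (hh : ContDiff ℝ 2 h) :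
    Continuous (laplacian d h) := by
  have : laplacian d h = fun x => ∑ i, pd d i (pd d i h) x := rfl
  rw [this]
  refine continuous_finsetSum _ fun i _ => ?_
  have h1 : ContDiff ℝ 1 (pd d i h) := pd_contDiff hh (by norm_num) i
  exact (pd_contDiff (m := 0) h1 (by norm_num) i).continuous

lemma pd_cv {d : ℕ} {k h : EuclideanSpace ℝ (Fin d) → ℝ} (hk : LocallyIntegrable k)
    (hh : ContDiff ℝ 1 h) (hs : HasCompactSupport h) (i) :
    pd d i (cv d k h) = cv d k (pd d i h) := by
  funext x
  have := (hs.hasFDerivAt_convolution_right (μ := volume) (ContinuousLinearMap.lsmul ℝ ℝ) hk hh x).fderiv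
  unfold pd cv
  rw [this, convolution_precompR_apply (ContinuousLinearMap.lsmul ℝ ℝ) hk (hs.fderiv ℝ) (hh.continuous_fderiv (by norm_num))]

lemma lap_cv {d : ℕ} {k h : EuclideanSpace ℝ (Fin d) → ℝ} (hk : LocallyIntegrable k)
    (hh : ContDiff ℝ 2 h) (hs : HasCompactSupport h) (x) :
    laplacian d (cv d k h) x = cv d k (laplacian d h) x := by
  have h1 : ∀ i, ContDiff ℝ 1 (pd d i h) := fun i => pd_contDiff hh (by norm_num) i
  have h0 : ∀ i, Continuous (pd d i (pd d i h)) := fun i =>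
    (pd_contDiff (m := 0) (h1 i) (by norm_num) i).continuous
  rw [laplacian_eq, cv_apply]
  simp_rw [laplacian_eq, Finset.mul_sum]
  rw [integral_finsetSum]
  · refine Finset.sum_congr rfl fun i _ => ?_
    rw [pd_cv hk (hh.of_le (by norm_num)) hs, pd_cv hk (h1 i) (pd_compact hs i), cv_apply]
  · intro i _
    exact (((pd_compact (pd_compact hs i) i).convolutionExists_right
      (ContinuousLinearMap.lsmul ℝ ℝ) hk (h0 i)) x)

/-- linear growth of convolutions -/
lemma cv_growth {d : ℕ} {k p : EuclideanSpace ℝ (Fin d) → ℝ} {A B : ℝ}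
    (hk : ∀ y, |k y| ≤ A * ‖y‖ + B)
    (hp : Continuous p) (hs : HasCompactSupport p) :
    ∃ C, 0 ≤ C ∧ ∀ x, |cv d k p x| ≤ C * (1 + ‖x‖) := by
  have hi : Integrable p := hp.integrable_of_hasCompactSupport hs
  have hi2 : Integrable (fun y => ‖y‖ * |p y|) :=
    (continuous_norm.mul hp.abs).integrable_of_hasCompactSupport
      ((hs.norm).mul_left)
  refine ⟨(|A| * ∫ y, |p y|) + ((|A| * ∫ y, ‖y‖ * |p y|) + |B| * ∫ y, |p y|), ?_, fun x => ?_⟩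
  · have := integral_nonneg (μ := volume) (f := fun y => |p y|) (fun y => abs_nonneg _)
    have := integral_nonneg (μ := volume) (f := fun y => ‖y‖ * |p y|) (fun y => by positivity)
    positivity
  rw [cv_apply']
  have hI1 := integral_nonneg (μ := volume) (f := fun y => |p y|) (fun y => abs_nonneg _)
  have hI2 := integral_nonneg (μ := volume) (f := fun y => ‖y‖ * |p y|) (fun y => by positivity)
  have hb : Integrable (fun y => (|A| * ‖x‖ + |B|) * |p y| + |A| * (‖y‖ * |p y|)) :=
    (hi.abs.const_mul _).add (hi2.const_mul _)
  have := norm_integral_le_of_norm_le (f := fun y => k (x - y) * p y) hb (Eventually.of_forall fun y => by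
    rw [norm_mul, Real.norm_eq_abs, Real.norm_eq_abs]
    have h1 := hk (x - y)
    have h2 := norm_sub_le x y
    have h3 : A * ‖x - y‖ ≤ |A| * (‖x‖ + ‖y‖) :=
      mul_le_mul (le_abs_self A) h2 (norm_nonneg _) (abs_nonneg _)
    have h4 := le_abs_self B
    have h5 : |k (x - y)| ≤ |A| * ‖x‖ + |B| + |A| * ‖y‖ := by nlinarith
    calc _ ≤ (|A| * ‖x‖ + |B| + |A| * ‖y‖) * |p y| := mul_le_mul_of_nonneg_right h5 (abs_nonneg _)
      _ = _ := by ring)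
  rw [integral_add (hi.abs.const_mul _) (hi2.const_mul _), integral_const_mul, integral_const_mul] at this
  rw [← Real.norm_eq_abs]
  refine this.trans ?_
  set I1 := ∫ y, |p y|
  set I2 := ∫ y, ‖y‖ * |p y|
  have e1 : 0 ≤ |A| * I1 := by positivity
  have e2 : 0 ≤ |A| * I2 * ‖x‖ := by positivity
  have e3 : 0 ≤ |B| * I1 * ‖x‖ := by positivity
  nlinarith

/-- extension of the weak formulation to C² compactly supported functions -/
lemma weak_C2 (d : ℕ) (f : EuclideanSpace ℝ (Fin d) → ℝ) (hf : Continuous f)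
    (ν : Measure (EuclideanSpace ℝ (Fin d))) (hνfin : IsLocallyFiniteMeasure ν)
    (hν : ∀ φ : EuclideanSpace ℝ (Fin d) → ℝ, ContDiff ℝ (⊤ : ℕ∞) φ → HasCompactSupport φ →
      (∫ x, φ x ∂ν) = (1 / 2) * ∫ x, f x * laplacian d φ x)
    (h : EuclideanSpace ℝ (Fin d) → ℝ) (hh : ContDiff ℝ 2 h) (hs : HasCompactSupport h) :
    (∫ x, h x ∂ν) = (1 / 2) * ∫ x, f x * laplacian d h x := by
  obtain ⟨R, hR⟩ := hs.isCompact.isBounded.subset_closedBall (0 : EuclideanSpace ℝ (Fin d))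
  let b : ℕ → ContDiffBump (0 : EuclideanSpace ℝ (Fin d)) := fun n =>
    ⟨1 / (2 * ((n : ℝ) + 1)), 1 / ((n : ℝ) + 1), by positivity, by
      apply one_div_lt_one_div_of_lt <;> nlinarith [(Nat.cast_nonneg n : (0:ℝ) ≤ n)]⟩
  have hb0 : Tendsto (fun n => (b n).rOut) atTop (𝓝 0) := tendsto_one_div_add_atTop_nhds_zero_nat
  have hb1 : ∀ n, (b n).rOut ≤ 1 := fun n => by
    change 1 / ((n : ℝ) + 1) ≤ 1
    rw [div_le_one (by positivity)]; linarith [(Nat.cast_nonneg n : (0:ℝ) ≤ n)]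
  let ρ : ℕ → EuclideanSpace ℝ (Fin d) → ℝ := fun n => (b n).normed volume
  have hρc : ∀ n, Continuous (ρ n) := fun n => (b n).continuous_normed
  have hρs : ∀ n, HasCompactSupport (ρ n) := fun n => (b n).hasCompactSupport_normed
  have hρsm : ∀ n, ContDiff ℝ (⊤ : ℕ∞) (ρ n) := fun n => (b n).contDiff_normed
  -- general facts
  have key : ∀ p : EuclideanSpace ℝ (Fin d) → ℝ, Continuous p → HasCompactSupport p →
      tsupport p ⊆ closedBall 0 R → ∃ M, ∀ n x, ‖cv d (ρ n) p x‖ ≤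
        (closedBall (0 : EuclideanSpace ℝ (Fin d)) (R+1)).indicator (fun _ => M) x := by
    intro p hp hps hpR
    obtain ⟨M, hM⟩ := hp.bounded_above_of_compact_support hps
    refine ⟨3 * M, fun n x => ?_⟩
    by_cases hx : x ∈ closedBall (0 : EuclideanSpace ℝ (Fin d)) (R+1)
    · rw [Set.indicator_of_mem hx]
      have := ContDiffBump.dist_normed_convolution_le (φ := b n) (μ := volume) (g := p) (x₀ := x) (ε := 2 * M)
        hp.aestronglyMeasurable (fun y _ => by
          rw [dist_eq_norm]; linarith [norm_sub_le (p y) (p x), hM y, hM x])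
      rw [dist_eq_norm] at this
      change ‖cv d (ρ n) p x - p x‖ ≤ _ at this
      have h3 := norm_sub_norm_le (cv d (ρ n) p x) (p x)
      linarith [hM x]
    · rw [Set.indicator_of_notMem hx, cv_apply]
      have : ∀ y, ρ n y * p (x - y) = 0 := by
        intro y
        by_cases hy : y ∈ ball (0 : EuclideanSpace ℝ (Fin d)) (b n).rOut
        · have : p (x - y) = 0 := by
            apply image_eq_zero_of_notMem_tsupport
            intro hc
            have h1 := hpR hc
            rw [mem_closedBall_zero_iff] at h1 hx
            rw [mem_ball_zero_iff] at hy
            have := norm_add_le (x - y) y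
            rw [sub_add_cancel] at this
            linarith [hb1 n]
          rw [this, mul_zero]
        · have : ρ n y = 0 := by
            rw [← Function.notMem_support]
            change y ∉ Function.support ((b n).normed volume)
            rw [ContDiffBump.support_normed_eq]; exact hy
          rw [this, zero_mul]
      simp [this]
  have hcs : ∀ n p, HasCompactSupport p → HasCompactSupport (cv d (ρ n) p) := fun n p hp =>
    HasCompactSupport.convolution _ (hρs n) hp
  have hcont : ∀ n p, Continuous p → HasCompactSupport p → Continuous (cv d (ρ n) p) :=
    fun n p hp hps => hps.continuous_convolution_right _ (hρc n).locallyIntegrable hp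
  have hlapR : tsupport (laplacian d h) ⊆ closedBall 0 R := by
    refine subset_trans ?_ hR
    refine closure_minimal ?_ (isClosed_tsupport h)
    intro x hx
    by_contra hc
    apply hx
    rw [laplacian_eq]
    refine Finset.sum_eq_zero fun i _ => ?_
    apply image_eq_zero_of_notMem_tsupport
    intro h1
    exact hc (tsupport_fderiv_apply_subset ℝ _ (tsupport_fderiv_apply_subset ℝ _ h1))
  obtain ⟨M1, hM1⟩ := key h hh.continuous hs hR
  obtain ⟨M2, hM2⟩ := key (laplacian d h) (lap_cont hh) (lap_compact hs) hlapR
  have T1 : Tendsto (fun n => ∫ x, cv d (ρ n) h x ∂ν) atTop (𝓝 (∫ x, h x ∂ν)) := by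
    refine tendsto_integral_of_dominated_convergence _ (fun n =>
      (hcont n h hh.continuous hs).aestronglyMeasurable) ?_ (fun n => Eventually.of_forall (hM1 n))
      (Eventually.of_forall fun x =>
        ContDiffBump.convolution_tendsto_right_of_continuous hb0 hh.continuous x)
    rw [integrable_indicator_iff measurableSet_closedBall]
    exact integrableOn_const (isCompact_closedBall _ _).measure_lt_top.ne
  have T2 : Tendsto (fun n => ∫ x, f x * cv d (ρ n) (laplacian d h) x) atTop
      (𝓝 (∫ x, f x * laplacian d h x)) := by
    refine tendsto_integral_of_dominated_convergence
      (fun x => (closedBall (0 : EuclideanSpace ℝ (Fin d)) (R+1)).indicator (fun x => ‖f x‖ * M2) x) (fun n =>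
      (hf.mul (hcont n _ (lap_cont hh) (lap_compact hs))).aestronglyMeasurable) ?_
      (fun n => Eventually.of_forall fun x => ?_)
      (Eventually.of_forall fun x => Tendsto.const_mul _
        (ContDiffBump.convolution_tendsto_right_of_continuous hb0 (lap_cont hh) x))
    · rw [integrable_indicator_iff measurableSet_closedBall]
      exact (hf.norm.mul continuous_const).continuousOn.integrableOn_compact (isCompact_closedBall _ _)
    · rw [norm_mul]
      refine (mul_le_mul_of_nonneg_left (hM2 n x) (norm_nonneg _)).trans_eq ?_
      by_cases hx : x ∈ closedBall (0 : EuclideanSpace ℝ (Fin d)) (R+1)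
      · simp only [Set.indicator_of_mem hx]
      · simp only [Set.indicator_of_notMem hx, mul_zero]
  have E : ∀ n, (∫ x, cv d (ρ n) h x ∂ν) = (1/2) * ∫ x, f x * cv d (ρ n) (laplacian d h) x := by
    intro n
    rw [hν (cv d (ρ n) h) ((hρs n).contDiff_convolution_left _ (hρsm n) hh.continuous.locallyIntegrable)
      (hcs n h hs)]
    simp_rw [lap_cv (hρc n).locallyIntegrable hh hs]
  refine tendsto_nhds_unique T1 ?_
  simp_rw [E]
  exact T2.const_mul _

lemma hk_pos {d : ℕ} {t : ℝ} (ht : 0 < t) (y : EuclideanSpace ℝ (Fin d)) : 0 < heatKernel d t y := by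
  unfold heatKernel; positivity

lemma hk_cont {d : ℕ} {t : ℝ} : Continuous (heatKernel d t) := by
  unfold heatKernel; fun_prop

lemma exp_int {d : ℕ} {b : ℝ} (hb : 0 < b) :
    Integrable (fun v : EuclideanSpace ℝ (Fin d) => Real.exp (-b * ‖v‖ ^ 2)) := by
  by_contra hc
  have h1 := GaussianFourier.integral_rexp_neg_mul_sq_norm (V := EuclideanSpace ℝ (Fin d)) hb
  rw [integral_undef hc] at h1
  have : 0 < (Real.pi / b) ^ ((Module.finrank ℝ (EuclideanSpace ℝ (Fin d)) : ℝ) / 2) := by positivity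
  linarith

lemma hk_int2 {d : ℕ} {t : ℝ} (ht : 0 < t) :
    Integrable (fun v : EuclideanSpace ℝ (Fin d) => (1 + ‖v‖) ^ 2 * heatKernel d t v) := by
  have hb : 0 < 1 / (4 * t) := by positivity
  refine ((exp_int (d := d) hb).const_mul
    ((2 * Real.pi * t) ^ (-(d : ℝ) / 2) * (2 + 8 * t))).mono' ?_ ?_
  · exact (Continuous.mul (by fun_prop) hk_cont).aestronglyMeasurable
  · refine Eventually.of_forall fun v => ?_
    rw [Real.norm_of_nonneg (mul_nonneg (by positivity) (hk_pos ht v).le)]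
    unfold heatKernel
    have e : Real.exp (-‖v‖ ^ 2 / (2 * t)) =
        Real.exp (-(1 / (4 * t)) * ‖v‖ ^ 2) * Real.exp (-(1 / (4 * t)) * ‖v‖ ^ 2) := by
      rw [← Real.exp_add]; congr 1; field_simp; ring
    have e2 : (1 + ‖v‖) ^ 2 * Real.exp (-(1 / (4 * t)) * ‖v‖ ^ 2) ≤ 2 + 8 * t := by
      have h1 := Real.add_one_le_exp (1 / (4 * t) * ‖v‖ ^ 2)
      rw [neg_mul, Real.exp_neg, ← div_eq_mul_inv, div_le_iff₀ (Real.exp_pos _)]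
      have h2 : (2 + 8 * t) * (1 / (4 * t) * ‖v‖ ^ 2 + 1) ≤ (2 + 8 * t) * Real.exp (1 / (4 * t) * ‖v‖ ^ 2) :=
        mul_le_mul_of_nonneg_left h1 (by positivity)
      have h3 : (2 + 8 * t) * (1 / (4 * t) * ‖v‖ ^ 2 + 1) = 2 + 2 * ‖v‖ ^ 2 + (2 * (1 / (4 * t) * ‖v‖ ^ 2) + 8 * t) := by
        field_simp; ring
      have h4 : 0 ≤ 2 * (1 / (4 * t) * ‖v‖ ^ 2) + 8 * t := by positivity
      nlinarith [sq_nonneg (‖v‖ - 1)]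
    rw [e]
    calc _ = (2 * Real.pi * t) ^ (-(d : ℝ) / 2) * ((1 + ‖v‖) ^ 2 * Real.exp (-(1 / (4 * t)) * ‖v‖ ^ 2))
          * Real.exp (-(1 / (4 * t)) * ‖v‖ ^ 2) := by ring
      _ ≤ _ := by gcongr

/-- Continuous functions of quadratic growth are integrable against the kernel. -/
lemma hk_int_of_growth {d : ℕ} {t C : ℝ} (ht : 0 < t) {g : EuclideanSpace ℝ (Fin d) → ℝ}
    (hg : AEStronglyMeasurable g volume) (hC : ∀ x, |g x| ≤ C * (1 + ‖x‖) ^ 2) :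
    Integrable (fun v => g v * heatKernel d t v) := by
  refine ((hk_int2 (d := d) ht).const_mul C).mono' (hg.mul hk_cont.aestronglyMeasurable)
    (Eventually.of_forall fun v => ?_)
  rw [norm_mul, Real.norm_of_nonneg (hk_pos ht v).le, ← mul_assoc]
  exact mul_le_mul_of_nonneg_right (hC v) (hk_pos ht v).le

lemma hk_one (d : ℕ) : ∫ v, heatKernel d 1 v = 1 := by
  have h1 := GaussianFourier.integral_rexp_neg_mul_sq_norm (V := EuclideanSpace ℝ (Fin d)) (b := 1/2) (by norm_num)
  have : ∀ v : EuclideanSpace ℝ (Fin d), heatKernel d 1 v =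
      (2 * Real.pi * 1) ^ (-(d : ℝ) / 2) * Real.exp (-(1/2) * ‖v‖ ^ 2) := by
    intro v; unfold heatKernel; congr 2; ring
  simp_rw [this]
  rw [integral_const_mul, h1, finrank_euclideanSpace_fin,
    show Real.pi / (1/2) = 2 * Real.pi * 1 by ring, ← Real.rpow_add (by positivity)]
  rw [show -(d:ℝ)/2 + d/2 = 0 by ring, Real.rpow_zero]

lemma hk_neg (d : ℕ) (t : ℝ) (v) : heatKernel d t (-v) = heatKernel d t v := by
  unfold heatKernel; rw [norm_neg]

lemma hk_scale {d : ℕ} {s : ℝ} (hs : 0 < s) (g : EuclideanSpace ℝ (Fin d) → ℝ) :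
    ∫ z, g z * heatKernel d s z = ∫ w, g (√s • w) * heatKernel d 1 w := by
  have hq : 0 < √s := Real.sqrt_pos.2 hs
  have h1 := Measure.integral_comp_smul (μ := volume) (fun z => g z * heatKernel d s z) (√s)
  have h2 : ∀ w, heatKernel d s (√s • w) = (√s ^ d)⁻¹ * heatKernel d 1 w := by
    intro w
    unfold heatKernel
    rw [norm_smul, Real.norm_of_nonneg hq.le, mul_pow, Real.sq_sqrt hs.le,
      show 2 * Real.pi * s = (2 * Real.pi * 1) * s by ring, Real.mul_rpow (by positivity) hs.le]
    have : s ^ (-(d:ℝ)/2) = (√s ^ d)⁻¹ := by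
      rw [Real.sqrt_eq_rpow, ← Real.rpow_natCast, ← Real.rpow_mul hs.le, ← Real.rpow_neg hs.le]
      congr 1; ring
    rw [this]
    rw [show -(s * ‖w‖ ^ 2) / (2 * s) = -‖w‖ ^ 2 / (2 * 1) by field_simp]
    ring
  rw [finrank_euclideanSpace_fin, abs_of_nonneg (by positivity), smul_eq_mul] at h1
  have h3 : ∀ w, g (√s • w) * heatKernel d s (√s • w) = (√s ^ d)⁻¹ * (g (√s • w) * heatKernel d 1 w) := by
    intro w; rw [h2]; ring
  simp_rw [h3] at h1
  rw [integral_const_mul] at h1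
  have : (√s ^ d)⁻¹ ≠ 0 := by positivity
  exact (mul_left_cancel₀ this h1).symm

lemma fderiv_hk {d : ℕ} (i : Fin d) (w : EuclideanSpace ℝ (Fin d)) :
    fderiv ℝ (heatKernel d 1) w (EuclideanSpace.single i 1) = - (w i * heatKernel d 1 w) := by
  have h1 : HasFDerivAt (fun y : EuclideanSpace ℝ (Fin d) => ‖y‖ ^ 2) (2 • (innerSL ℝ w)) w :=
    (hasStrictFDerivAt_norm_sq w).hasFDerivAt
  have h2 : HasFDerivAt (heatKernel d 1) _ w :=
    (((h1.neg.mul_const ((2 * (1:ℝ))⁻¹)).exp).const_mul ((2 * Real.pi * 1) ^ (-(d : ℝ) / 2)))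
  rw [h2.fderiv]
  simp [heatKernel, EuclideanSpace.inner_single_right, div_eq_mul_inv]
  ring

lemma hk_diff {d : ℕ} : Differentiable ℝ (heatKernel d 1) := by
  intro w
  have h1 : HasFDerivAt (fun y : EuclideanSpace ℝ (Fin d) => ‖y‖ ^ 2) (2 • (innerSL ℝ w)) w :=
    (hasStrictFDerivAt_norm_sq w).hasFDerivAt
  have h2 : HasFDerivAt (heatKernel d 1) _ w :=
    (((h1.neg.mul_const ((2 * (1:ℝ))⁻¹)).exp).const_mul ((2 * Real.pi * 1) ^ (-(d : ℝ) / 2)))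
  exact h2.differentiableAt

/-- Gaussian integration by parts. -/
lemma gauss_ibp {d : ℕ} (i : Fin d) (r : ℝ) {q : EuclideanSpace ℝ (Fin d) → ℝ} (hq : ContDiff ℝ 1 q)
    {C C' : ℝ} (hC : 0 ≤ C) (hC' : 0 ≤ C') (h1 : ∀ x, |q x| ≤ C * (1 + ‖x‖)) (h2 : ∀ x, |pd d i q x| ≤ C' * (1 + ‖x‖)) :
    ∫ w : EuclideanSpace ℝ (Fin d), w i * q (r • w) * heatKernel d 1 w =
      r * ∫ w, pd d i q (r • w) * heatKernel d 1 w := by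
  have hsc : ∀ w : EuclideanSpace ℝ (Fin d), 1 + ‖r • w‖ ≤ (1 + |r|) * (1 + ‖w‖) := by
    intro w; rw [norm_smul, Real.norm_eq_abs]
    nlinarith [abs_nonneg r, norm_nonneg w]
  have hqc : Continuous q := hq.continuous
  have hpc : Continuous (pd d i q) := (pd_contDiff (m := 0) hq (by norm_num) i).continuous
  have hd : ∀ w, fderiv ℝ (fun w => q (r • w)) w (EuclideanSpace.single i 1) = r * pd d i q (r • w) := by
    intro w
    have : HasFDerivAt (fun w => q (r • w)) _ w :=
      ((hq.differentiable (by norm_num) (r • w)).hasFDerivAt).comp w ((hasFDerivAt_id w).const_smul r)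
    rw [this.fderiv]
    simp [pd]
  have := integral_mul_fderiv_eq_neg_fderiv_mul_of_integrable (μ := volume) (f := fun w => q (r • w))
    (g := heatKernel d 1) (v := EuclideanSpace.single i 1) ?_ ?_ ?_ ?_ ?_
  · simp_rw [fderiv_hk, hd] at this
    rw [← integral_const_mul]
    have e1 : ∀ w : EuclideanSpace ℝ (Fin d), w i * q (r • w) * heatKernel d 1 w = - (q (r • w) * -(w i * heatKernel d 1 w)) := by
      intro w; ring
    simp_rw [e1]
    rw [integral_neg, this, neg_neg]
    simp_rw [mul_assoc]
  · simp_rw [hd]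
    refine hk_int_of_growth (C := |r| * (C' * (1 + |r|))) one_pos (by fun_prop) fun x => ?_
    rw [abs_mul, mul_assoc]
    refine mul_le_mul_of_nonneg_left ((h2 _).trans ?_) (abs_nonneg _)
    rw [mul_assoc]
    refine mul_le_mul_of_nonneg_left ((hsc x).trans ?_) hC'
    refine mul_le_mul_of_nonneg_left ?_ (by positivity)
    nlinarith [norm_nonneg x]
  · simp_rw [fderiv_hk]
    have : Integrable (fun w : EuclideanSpace ℝ (Fin d) => (- (w i * q (r • w))) * heatKernel d 1 w) := by
      refine hk_int_of_growth (C := C * (1 + |r|)) one_pos (by fun_prop) fun x => ?_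
      rw [abs_neg, abs_mul]
      have hx : |x i| ≤ ‖x‖ := PiLp.norm_apply_le x i
      calc _ ≤ ‖x‖ * (C * ((1 + |r|) * (1 + ‖x‖))) := by
            refine mul_le_mul hx ((h1 _).trans ?_) (abs_nonneg _) (norm_nonneg _)
            exact mul_le_mul_of_nonneg_left (hsc x) hC
        _ = C * (1 + |r|) * (‖x‖ * (1 + ‖x‖)) := by ring
        _ ≤ _ := by
            refine mul_le_mul_of_nonneg_left ?_ (by positivity)
            nlinarith [norm_nonneg x]
    refine this.congr (Eventually.of_forall fun w => ?_)
    simp only; ring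
  · refine hk_int_of_growth (C := C * (1 + |r|)) one_pos (by fun_prop) fun x => ?_
    refine (h1 _).trans ?_
    rw [mul_assoc]
    refine mul_le_mul_of_nonneg_left ((hsc x).trans ?_) hC
    refine mul_le_mul_of_nonneg_left ?_ (by positivity)
    nlinarith [norm_nonneg x]
  · intro x _
    exact (hq.differentiable (by norm_num) _).comp x (differentiableAt_id.const_smul r)
  · intro x _; exact hk_diff x

lemma fderiv_eq_sum_pd {d : ℕ} (G : EuclideanSpace ℝ (Fin d) → ℝ) (x w : EuclideanSpace ℝ (Fin d)) :
    fderiv ℝ G x w = ∑ i, w i * pd d i G x := by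
  have hw : w = ∑ i, w i • (EuclideanSpace.single i (1:ℝ)) := by
    have := (EuclideanSpace.basisFun (Fin d) ℝ).sum_repr w
    simpa using this.symm
  conv_lhs => rw [hw]
  simp [pd]

lemma scale_bound {d : ℕ} {q : EuclideanSpace ℝ (Fin d) → ℝ} {C r R : ℝ} (hC : 0 ≤ C)
    (h1 : ∀ x, |q x| ≤ C * (1 + ‖x‖)) (hr : |r| ≤ R) (w : EuclideanSpace ℝ (Fin d)) :
    |q (r • w)| ≤ C * (1 + R) * (1 + ‖w‖) := by
  refine (h1 _).trans ?_
  rw [norm_smul, Real.norm_eq_abs, mul_assoc]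
  refine mul_le_mul_of_nonneg_left ?_ hC
  nlinarith [abs_nonneg r, norm_nonneg w, mul_le_mul_of_nonneg_right hr (norm_nonneg w)]

lemma hasDeriv_Phi {d : ℕ} {G : EuclideanSpace ℝ (Fin d) → ℝ} (hG : ContDiff ℝ 2 G)
    {C : ℝ} (hC : 0 ≤ C) (h0 : ∀ x, |G x| ≤ C * (1 + ‖x‖))
    (h1 : ∀ i x, |pd d i G x| ≤ C * (1 + ‖x‖))
    (h2 : ∀ i x, |pd d i (pd d i G) x| ≤ C * (1 + ‖x‖)) (r : ℝ) :
    HasDerivAt (fun r => ∫ w, G (r • w) * heatKernel d 1 w)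
      (r * ∫ w, laplacian d G (r • w) * heatKernel d 1 w) r := by
  have hGc := hG.continuous
  have hp1 : ∀ i, ContDiff ℝ 1 (pd d i G) := fun i => pd_contDiff hG (by norm_num) i
  have hpc : ∀ i, Continuous (pd d i G) := fun i => (hp1 i).continuous
  have hpc2 : ∀ i, Continuous (pd d i (pd d i G)) := fun i =>
    (pd_contDiff (m := 0) (hp1 i) (by norm_num) i).continuous
  have hk := hk_cont (d := d) (t := 1)
  have hsq : ∀ w : EuclideanSpace ℝ (Fin d), 1 + ‖w‖ ≤ (1 + ‖w‖) ^ 2 := fun w => by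
    nlinarith [norm_nonneg w]
  have hterm : ∀ i (x : ℝ) (R : ℝ), |x| ≤ R → ∀ w : EuclideanSpace ℝ (Fin d),
      |w i * pd d i G (x • w)| ≤ C * (1 + R) * (1 + ‖w‖) ^ 2 := by
    intro i x R hx w
    have hR : 0 ≤ R := (abs_nonneg x).trans hx
    rw [abs_mul]
    have hw : |w i| ≤ ‖w‖ := PiLp.norm_apply_le w i
    calc _ ≤ ‖w‖ * (C * (1 + R) * (1 + ‖w‖)) :=
          mul_le_mul hw (scale_bound hC (h1 i) hx w) (abs_nonneg _) (norm_nonneg _)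
      _ = C * (1 + R) * (‖w‖ * (1 + ‖w‖)) := by ring
      _ ≤ _ := by
        refine mul_le_mul_of_nonneg_left ?_ (by positivity)
        nlinarith [norm_nonneg w]
  have main := (hasDerivAt_integral_of_dominated_loc_of_deriv_le (μ := volume)
    (F := fun r w => G (r • w) * heatKernel d 1 w)
    (F' := fun r w => ∑ i, w i * pd d i G (r • w) * heatKernel d 1 w)
    (bound := fun w => ∑ i : Fin d, C * (1 + (|r| + 1)) * ((1 + ‖w‖) ^ 2 * heatKernel d 1 w))
    (x₀ := r) (s := ball r 1) (ball_mem_nhds r one_pos) ?_ ?_ ?_ ?_ ?_ ?_).2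
  · convert! main using 1
    rw [integral_finsetSum]
    · simp_rw [gauss_ibp _ r (hp1 _) hC hC (h1 _) (h2 _), laplacian_eq, Finset.sum_mul]
      rw [integral_finsetSum, Finset.mul_sum]
      intro i _
      refine hk_int_of_growth (C := C * (1 + |r|)) one_pos
        (Continuous.aestronglyMeasurable (by have := hpc2 i; fun_prop)) fun x => ?_
      exact (scale_bound hC (h2 i) le_rfl x).trans
        (mul_le_mul_of_nonneg_left (hsq x) (by positivity))
    · intro i _
      exact hk_int_of_growth (C := C * (1 + |r|)) one_pos
        (Continuous.aestronglyMeasurable (by have := hpc i; fun_prop)) (hterm i r _ le_rfl)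
  · exact Eventually.of_forall fun x => Continuous.aestronglyMeasurable (by fun_prop)
  · refine hk_int_of_growth (C := C * (1 + |r|)) one_pos
      (Continuous.aestronglyMeasurable (by fun_prop)) fun x => ?_
    exact (scale_bound hC h0 le_rfl x).trans
        (mul_le_mul_of_nonneg_left (hsq x) (by positivity))
  · exact Continuous.aestronglyMeasurable (by fun_prop)
  · refine Eventually.of_forall fun w x hx => ?_
    refine (norm_sum_le _ _).trans (Finset.sum_le_sum fun i _ => ?_)
    rw [norm_mul, Real.norm_of_nonneg (hk_pos one_pos w).le, ← mul_assoc]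
    refine mul_le_mul_of_nonneg_right (hterm i x _ ?_ w) (hk_pos one_pos w).le
    rw [mem_ball, Real.dist_eq] at hx
    have := abs_sub_abs_le_abs_sub x r
    linarith
  · exact integrable_finsetSum _ fun i _ => (hk_int2 one_pos).const_mul _
  · refine Eventually.of_forall fun w x hx => ?_
    rw [← Finset.sum_mul, ← fderiv_eq_sum_pd]
    refine HasDerivAt.mul_const ?_ _
    have hd : HasDerivAt (fun x : ℝ => x • w) w x := by
      simpa using (hasDerivAt_id x).smul_const w
    exact ((hG.differentiable (by norm_num) (x • w)).hasFDerivAt).comp_hasDerivAt x hd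

lemma cont_Psi {d : ℕ} {u : EuclideanSpace ℝ (Fin d) → ℝ} (hu : Continuous u)
    {C : ℝ} (hC : 0 ≤ C) (h0 : ∀ x, |u x| ≤ C * (1 + ‖x‖)) :
    Continuous (fun r : ℝ => ∫ w, u (r • w) * heatKernel d 1 w) := by
  have hk := hk_cont (d := d) (t := 1)
  rw [continuous_iff_continuousAt]
  intro r
  refine continuousAt_of_dominated (bound := fun w => C * (1 + (|r| + 1)) * ((1 + ‖w‖) ^ 2 * heatKernel d 1 w))
    (Eventually.of_forall fun x => Continuous.aestronglyMeasurable (by fun_prop)) ?_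
    ((hk_int2 one_pos).const_mul _) (Eventually.of_forall fun w => by fun_prop)
  filter_upwards [ball_mem_nhds r one_pos] with x hx
  refine Eventually.of_forall fun w => ?_
  rw [norm_mul, Real.norm_of_nonneg (hk_pos one_pos w).le, ← mul_assoc]
  refine mul_le_mul_of_nonneg_right ?_ (hk_pos one_pos w).le
  rw [mem_ball, Real.dist_eq] at hx
  have := abs_sub_abs_le_abs_sub x r
  refine (scale_bound hC h0 (by linarith : |x| ≤ |r| + 1) w).trans ?_
  refine mul_le_mul_of_nonneg_left ?_ (by positivity)
  nlinarith [norm_nonneg w]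

lemma dynkin {d : ℕ} {G : EuclideanSpace ℝ (Fin d) → ℝ} (hG : ContDiff ℝ 2 G)
    {C : ℝ} (hC : 0 ≤ C) (h0 : ∀ x, |G x| ≤ C * (1 + ‖x‖))
    (h1 : ∀ i x, |pd d i G x| ≤ C * (1 + ‖x‖))
    (h2 : ∀ i x, |pd d i (pd d i G) x| ≤ C * (1 + ‖x‖))
    (h3 : ∀ x, |laplacian d G x| ≤ C * (1 + ‖x‖)) {t : ℝ} (ht : 0 < t) :
    (∫ z, G z * heatKernel d t z) - G 0 =
      ∫ s in (0:ℝ)..t, ∫ z, (1 / 2 * laplacian d G z) * heatKernel d s z := by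
  set Φ : ℝ → ℝ := fun r => ∫ w, G (r • w) * heatKernel d 1 w with hΦ
  set Ψ : ℝ → ℝ := fun r => ∫ w, laplacian d G (r • w) * heatKernel d 1 w with hΨ
  have hΦ' : ∀ r, HasDerivAt Φ (r * Ψ r) r := hasDeriv_Phi hG hC h0 h1 h2
  have hΨc : Continuous Ψ := cont_Psi (lap_cont hG) hC h3
  have hΦc : Continuous Φ := continuous_iff_continuousAt.2 fun r => (hΦ' r).continuousAt
  have e0 : Φ √0 = G 0 := by
    simp only [hΦ, Real.sqrt_zero, zero_smul]
    rw [integral_const_mul, hk_one, mul_one]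
  have F := intervalIntegral.integral_eq_sub_of_hasDerivAt_of_le (f := fun s => Φ √s)
    (f' := fun s => 1 / 2 * Ψ √s) ht.le (hΦc.comp Real.continuous_sqrt).continuousOn ?_
    ((continuous_const.mul (hΨc.comp Real.continuous_sqrt)).intervalIntegrable _ _)
  · rw [e0] at F
    rw [hk_scale ht]
    change Φ √t - G 0 = _
    rw [← F]
    refine intervalIntegral.integral_congr_ae (Eventually.of_forall fun s hs => ?_)
    rw [Set.uIoc_of_le ht.le] at hs
    rw [hk_scale hs.1]
    simp only [hΨ, mul_assoc]
    rw [integral_const_mul]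
  · intro s hs
    have hq : 0 < √s := Real.sqrt_pos.2 hs.1
    have := (hΦ' √s).comp s (Real.hasDerivAt_sqrt hs.1.ne')
    convert! this using 1
    field_simp

lemma weak_translate (d : ℕ) (f : EuclideanSpace ℝ (Fin d) → ℝ) (hf : Continuous f)
    (ν : Measure (EuclideanSpace ℝ (Fin d))) (hνfin : IsLocallyFiniteMeasure ν)
    (hν : ∀ φ : EuclideanSpace ℝ (Fin d) → ℝ, ContDiff ℝ (⊤ : ℕ∞) φ → HasCompactSupport φ →
      (∫ x, φ x ∂ν) = (1 / 2) * ∫ x, f x * laplacian d φ x)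
    (p : EuclideanSpace ℝ (Fin d) → ℝ) (hp : ContDiff ℝ 2 p) (hs : HasCompactSupport p)
    (z : EuclideanSpace ℝ (Fin d)) :
    (∫ y, p (y + z) ∂ν) = 1 / 2 * cv d (fun x => f (-x)) (laplacian d p) z := by
  have hs' : HasCompactSupport (fun y => p (y + z)) :=
    hs.comp_homeomorph (Homeomorph.addRight z)
  rw [weak_C2 d f hf ν hνfin hν (fun y => p (y + z)) (hp.comp (contDiff_id.add contDiff_const)) hs', cv_apply]
  have e : ∀ i (q : EuclideanSpace ℝ (Fin d) → ℝ), pd d i (fun y => q (y + z)) = fun y => pd d i q (y + z) := by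
    intro i q; funext y; unfold pd; rw [fderiv_comp_add_right]
  have e2 : ∀ x, laplacian d (fun y => p (y + z)) x = laplacian d p (x + z) := by
    intro x; simp only [laplacian_eq, e]
  simp_rw [e2]
  rw [← integral_neg_eq_self]
  simp_rw [neg_add_eq_sub]

lemma nu_growth (d : ℕ) (f : EuclideanSpace ℝ (Fin d) → ℝ) (hf : Continuous f)
    (A B : ℝ) (hgrowth : ∀ y, |f y| ≤ A * ‖y‖ + B)
    (ν : Measure (EuclideanSpace ℝ (Fin d))) (hνfin : IsLocallyFiniteMeasure ν)
    (hν : ∀ φ : EuclideanSpace ℝ (Fin d) → ℝ, ContDiff ℝ (⊤ : ℕ∞) φ → HasCompactSupport φ →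
      (∫ x, φ x ∂ν) = (1 / 2) * ∫ x, f x * laplacian d φ x)
    (h : EuclideanSpace ℝ (Fin d) → ℝ) (hh : Continuous h) (hs : HasCompactSupport h) :
    ∃ C, 0 ≤ C ∧ ∀ z, ∫ y, |h (y + z)| ∂ν ≤ C * (1 + ‖z‖) := by
  obtain ⟨M, hM⟩ := hh.bounded_above_of_compact_support hs
  obtain ⟨R, hR⟩ := hs.isCompact.isBounded.subset_closedBall (0 : EuclideanSpace ℝ (Fin d))
  have hM0 : 0 ≤ M := (norm_nonneg _).trans (hM 0)
  let b : ContDiffBump (0 : EuclideanSpace ℝ (Fin d)) := ⟨|R| + 1, |R| + 2, by positivity, by linarith⟩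
  have hbs : HasCompactSupport b := b.hasCompactSupport
  have hb2 : ContDiff ℝ 2 b := b.contDiff
  obtain ⟨C, hC, hCb⟩ := cv_growth (d := d) (k := fun x => f (-x)) (A := A) (B := B)
    (fun y => by simpa using hgrowth (-y)) (lap_cont hb2) (lap_compact hbs)
  refine ⟨M * (1 / 2 * C), by positivity, fun z => ?_⟩
  have hdom : ∀ y, |h y| ≤ M * b y := by
    intro y
    by_cases hy : y ∈ tsupport h
    · have : b y = 1 := b.one_of_mem_closedBall (by
        have := hR hy
        rw [mem_closedBall_zero_iff] at this ⊢
        change ‖y‖ ≤ |R| + 1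
        linarith [le_abs_self R])
      rw [this, mul_one]; exact hM y
    · rw [image_eq_zero_of_notMem_tsupport hy, abs_zero]
      exact mul_nonneg hM0 b.nonneg
  have hhz : HasCompactSupport (fun y => h (y + z)) := hs.comp_homeomorph (Homeomorph.addRight z)
  have hbz : HasCompactSupport (fun y => b (y + z)) := hbs.comp_homeomorph (Homeomorph.addRight z)
  have i1 : Integrable (fun y => h (y + z)) ν :=
    (hh.comp (continuous_id.add continuous_const)).integrable_of_hasCompactSupport hhz
  have i2 : Integrable (fun y => b (y + z)) ν :=
    (hb2.continuous.comp (continuous_id.add continuous_const)).integrable_of_hasCompactSupport hbz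
  calc _ ≤ ∫ y, M * b (y + z) ∂ν := integral_mono i1.abs (i2.const_mul M) fun y => hdom _
    _ = M * (1 / 2 * cv d (fun x => f (-x)) (laplacian d b) z) := by
      rw [integral_const_mul, weak_translate d f hf ν hνfin hν b hb2 hbs]
    _ ≤ M * (1 / 2 * (C * (1 + ‖z‖))) := by
      have := (le_abs_self _).trans (hCb z)
      gcongr
    _ = _ := by ring

lemma rhs_fubini (d : ℕ) (f : EuclideanSpace ℝ (Fin d) → ℝ) (hf : Continuous f)
    (A B : ℝ) (hgrowth : ∀ y, |f y| ≤ A * ‖y‖ + B)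
    (ν : Measure (EuclideanSpace ℝ (Fin d))) (hνfin : IsLocallyFiniteMeasure ν)
    (hν : ∀ φ : EuclideanSpace ℝ (Fin d) → ℝ, ContDiff ℝ (⊤ : ℕ∞) φ → HasCompactSupport φ →
      (∫ x, φ x ∂ν) = (1 / 2) * ∫ x, f x * laplacian d φ x)
    (h : EuclideanSpace ℝ (Fin d) → ℝ) (hh : Continuous h) (hs : HasCompactSupport h)
    {s : ℝ} (hs0 : 0 < s) :
    ∫ y, heatSemigroup d s h y ∂ν = ∫ z, (∫ y, h (y + z) ∂ν) * heatKernel d s z := by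
  obtain ⟨C, hC, hCb⟩ := nu_growth d f hf A B hgrowth ν hνfin hν h hh hs
  have hk := hk_cont (d := d) (t := s)
  have hi : ∀ z, Integrable (fun y => h (y + z)) ν := fun z =>
    (hh.comp (continuous_id.add continuous_const)).integrable_of_hasCompactSupport
      (hs.comp_homeomorph (Homeomorph.addRight z))
  unfold heatSemigroup
  have hm : Continuous (Function.uncurry fun y z => h (y + z) * heatKernel d s z) := by
    unfold Function.uncurry; fun_prop
  have hm2 : Continuous (Function.uncurry fun y z : EuclideanSpace ℝ (Fin d) => |h (y + z)|) := by
    unfold Function.uncurry; fun_prop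
  have hI : Integrable (Function.uncurry fun y z => h (y + z) * heatKernel d s z) (ν.prod volume) := by
    rw [integrable_prod_iff' hm.aestronglyMeasurable]
    refine ⟨Eventually.of_forall fun z => (hi z).mul_const (heatKernel d s z), ?_⟩
    have : Integrable (fun z => (∫ y, |h (y + z)| ∂ν) * heatKernel d s z) := by
      refine hk_int_of_growth (C := C) hs0 ?_ fun z => ?_
      · exact (hm2.stronglyMeasurable.integral_prod_left (μ := ν)).aestronglyMeasurable
      · rw [abs_of_nonneg (integral_nonneg fun y => abs_nonneg _)]
        refine (hCb z).trans (mul_le_mul_of_nonneg_left ?_ hC)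
        nlinarith [norm_nonneg z]
    refine this.congr (Eventually.of_forall fun z => ?_)
    simp only [Function.uncurry, norm_mul, Real.norm_eq_abs, abs_of_pos (hk_pos hs0 z)]
    rw [integral_mul_const]
  rw [integral_integral_swap hI]
  simp_rw [integral_mul_const]

lemma lhs_fubini (d : ℕ) (f : EuclideanSpace ℝ (Fin d) → ℝ) (hf : Continuous f)
    (A B : ℝ) (hgrowth : ∀ y, |f y| ≤ A * ‖y‖ + B)
    (h : EuclideanSpace ℝ (Fin d) → ℝ) (hh : Continuous h) (hs : HasCompactSupport h)
    {t : ℝ} (ht : 0 < t) :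
    (∫ x, h x * (heatSemigroup d t f x - f x)) =
      (∫ z, cv d (fun x => f (-x)) h z * heatKernel d t z) - cv d (fun x => f (-x)) h 0 := by
  have hk := hk_cont (d := d) (t := t)
  have hm : Continuous (Function.uncurry fun x z => h x * (f (x + z) * heatKernel d t z)) := by
    unfold Function.uncurry; fun_prop
  have i0 : Integrable (fun x => (|A| * ‖x‖ + |A| + |B|) * |h x|) :=
    (Continuous.mul (by fun_prop) hh.abs).integrable_of_hasCompactSupport hs.norm.mul_left
  have hI : Integrable (Function.uncurry fun x z => h x * (f (x + z) * heatKernel d t z))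
      (volume.prod volume) := by
    refine (i0.mul_prod (hk_int2 (d := d) ht)).mono' hm.aestronglyMeasurable
      (Eventually.of_forall fun ⟨x, z⟩ => ?_)
    simp only [Function.uncurry, norm_mul, Real.norm_eq_abs, abs_of_pos (hk_pos ht z)]
    have h5 : |f (x + z)| ≤ (|A| * ‖x‖ + |A| + |B|) * (1 + ‖z‖) ^ 2 := by
      have h1 := hgrowth (x + z)
      have h3 : A * ‖x + z‖ ≤ |A| * (‖x‖ + ‖z‖) :=
        mul_le_mul (le_abs_self A) (norm_add_le x z) (norm_nonneg _) (abs_nonneg _)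
      have h4 := le_abs_self B
      have hz : 1 + ‖z‖ ≤ (1 + ‖z‖) ^ 2 := by nlinarith [norm_nonneg z]
      have h6 : (|A| * ‖x‖ + |A| + |B|) * (1 + ‖z‖) ≤ (|A| * ‖x‖ + |A| + |B|) * (1 + ‖z‖) ^ 2 :=
        mul_le_mul_of_nonneg_left hz (by positivity)
      have h7 : 0 ≤ (|A| * ‖x‖ + |B|) * ‖z‖ + |A| := by positivity
      nlinarith
    calc _ = |h x| * |f (x + z)| * heatKernel d t z := by ring
      _ ≤ |h x| * ((|A| * ‖x‖ + |A| + |B|) * (1 + ‖z‖) ^ 2) * heatKernel d t z := by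
        have := (hk_pos ht z).le
        gcongr
      _ = _ := by ring
  have i1 : Integrable (fun x => h x * heatSemigroup d t f x) := by
    refine hI.integral_prod_left.congr (Eventually.of_forall fun x => ?_)
    simp only [Function.uncurry, heatSemigroup]
    rw [integral_const_mul]
  have i2 : Integrable (fun x => h x * f x) :=
    (hh.mul hf).integrable_of_hasCompactSupport hs.mul_right
  simp_rw [mul_sub]
  rw [integral_sub i1 i2]
  congr 1
  · have e : ∀ x, h x * heatSemigroup d t f x = ∫ z, h x * (f (x + z) * heatKernel d t z) := by
      intro x; rw [integral_const_mul]; rfl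
    simp_rw [e]
    rw [integral_integral_swap hI, ← integral_neg_eq_self]
    congr 1; funext z
    rw [hk_neg, cv_apply', ← integral_mul_const]
    congr 1; funext x
    rw [show -(z - x) = x + -z by abel]; ring
  · rw [cv_apply']
    congr 1; funext x
    rw [zero_sub, neg_neg, mul_comm]

theorem representation_theorem (d : ℕ)
    (f : EuclideanSpace ℝ (Fin d) → ℝ) (hf : ConvexOn ℝ Set.univ f)
    (A B : ℝ) (hgrowth : ∀ y, |f y| ≤ A * ‖y‖ + B)
    (ν : Measure (EuclideanSpace ℝ (Fin d))) (hνfin : IsLocallyFiniteMeasure ν)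
    (hν : ∀ φ : EuclideanSpace ℝ (Fin d) → ℝ, ContDiff ℝ (⊤ : ℕ∞) φ → HasCompactSupport φ →
      (∫ x, φ x ∂ν) = (1 / 2) * ∫ x, f x * laplacian d φ x)
    (h : EuclideanSpace ℝ (Fin d) → ℝ) (hh : ContDiff ℝ 2 h)
    (hhsupp : HasCompactSupport h) (t : ℝ) (ht : 0 < t) :
    (∫ x, h x * (heatSemigroup d t f x - f x)) =
      ∫ s in (0:ℝ)..t, ∫ y, heatSemigroup d s h y ∂ν := by
  have hfc : Continuous f := by
    rw [← continuousOn_univ]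
    exact hf.continuousOn isOpen_univ
  have hkc : Continuous (fun x => f (-x)) := hfc.comp continuous_neg
  have hkl : LocallyIntegrable (fun x => f (-x)) := hkc.locallyIntegrable
  have hkg : ∀ y, |f (-y)| ≤ A * ‖y‖ + B := fun y => by simpa using hgrowth (-y)
  have hh1 : ContDiff ℝ 1 h := hh.of_le (by norm_num)
  have hp1 : ∀ i, ContDiff ℝ 1 (pd d i h) := fun i => pd_contDiff hh (by norm_num) i
  have hpc2 : ∀ i, Continuous (pd d i (pd d i h)) := fun i =>
    (pd_contDiff (m := 0) (hp1 i) (by norm_num) i).continuous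
  obtain ⟨C0, hC0, hb0⟩ := cv_growth hkg hh.continuous hhsupp
  obtain ⟨C3, hC3, hb3⟩ := cv_growth hkg (lap_cont hh) (lap_compact hhsupp)
  choose C1 hC1 hb1 using fun i => cv_growth hkg (hp1 i).continuous (pd_compact hhsupp i)
  choose C2 hC2 hb2 using fun i => cv_growth hkg (hpc2 i) (pd_compact (pd_compact hhsupp i) i)
  have hS1 : 0 ≤ ∑ i, C1 i := Finset.sum_nonneg fun i _ => hC1 i
  have hS2 : 0 ≤ ∑ i, C2 i := Finset.sum_nonneg fun i _ => hC2 i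
  have hle1 : ∀ i, C1 i ≤ ∑ i, C1 i := fun i =>
    Finset.single_le_sum (f := C1) (fun i _ => hC1 i) (Finset.mem_univ i)
  have hle2 : ∀ i, C2 i ≤ ∑ i, C2 i := fun i =>
    Finset.single_le_sum (f := C2) (fun i _ => hC2 i) (Finset.mem_univ i)
  have hG : ContDiff ℝ 2 (cv d (fun x => f (-x)) h) :=
    hhsupp.contDiff_convolution_right (n := 2) _ hkl hh
  rw [lhs_fubini d f hfc A B hgrowth h hh.continuous hhsupp ht,
    dynkin hG (C := C0 + C3 + (∑ i, C1 i) + ∑ i, C2 i) (by positivity)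
      (fun x => (hb0 x).trans (mul_le_mul_of_nonneg_right (by linarith) (by positivity)))
      (fun i x => by
        rw [pd_cv hkl hh1 hhsupp]
        exact (hb1 i x).trans (mul_le_mul_of_nonneg_right (by linarith [hle1 i]) (by positivity)))
      (fun i x => by
        rw [pd_cv hkl hh1 hhsupp, pd_cv hkl (hp1 i) (pd_compact hhsupp i)]
        exact (hb2 i x).trans (mul_le_mul_of_nonneg_right (by linarith [hle2 i]) (by positivity)))
      (fun x => by
        rw [lap_cv hkl hh hhsupp]
        exact (hb3 x).trans (mul_le_mul_of_nonneg_right (by linarith) (by positivity))) ht]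
  refine intervalIntegral.integral_congr_ae (Eventually.of_forall fun s hs => ?_)
  rw [Set.uIoc_of_le ht.le] at hs
  rw [rhs_fubini d f hfc A B hgrowth ν hνfin hν h hh.continuous hhsupp hs.1]
  simp_rw [weak_translate d f hfc ν hνfin hν h hh hhsupp, lap_cv hkl hh hhsupp]
end

section
/- Let f : ℝ^d → ℝ be a convex function of at most linear growth, and let ν be the nonnegative locally finite Borel measure with ∫ φ dν = (1/2) ∫_{ℝ^d} f(x) Δφ(x) dx for all φ ∈ C_c^∞(ℝ^d). Then for Lebesgue-almost every x ∈ ℝ^d and every t > 0: (1/t)(∫_{ℝ^d} f(x+y) φ_t(y) dy − f(x)) = (1/t) ∫_0^t ∫_{ℝ^d} (2πs)^{−d/2} e^{−‖x−y‖²/(2s)} ν(dy) ds. -/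
open MeasureTheory Filter Metric
open scoped Topology ENNReal NNReal

lemma hs_int_exp (d : ℕ) {b : ℝ} (hb : 0 < b) :
    Integrable (fun v : EuclideanSpace ℝ (Fin d) => Real.exp (-b * ‖v‖ ^ 2)) := by
  have h := (GaussianFourier.integrable_cexp_neg_mul_sq_norm_add (V := EuclideanSpace ℝ (Fin d))
    (b := (b : ℂ)) (by simpa using hb) 0 0).norm
  refine h.congr (Eventually.of_forall fun v => ?_)
  simp only [Complex.norm_exp]
  congr 1
  simp [← Complex.ofReal_pow]

lemma hs_int_poly (d : ℕ) {b : ℝ} (hb : 0 < b) (C : ℝ) :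
    Integrable (fun v : EuclideanSpace ℝ (Fin d) =>
      C * (1 + ‖v‖ ^ 2) ^ 2 * Real.exp (-b * ‖v‖ ^ 2)) := by
  have h := (hs_int_exp d (half_pos hb)).const_mul (|C| * (1 + 4 / b) ^ 2)
  refine h.mono' (by fun_prop) (Eventually.of_forall fun v => ?_)
  have hr : 0 ≤ ‖v‖ ^ 2 := by positivity
  generalize ‖v‖ ^ 2 = r at hr
  have h1 : 1 + r ≤ (1 + 4 / b) * Real.exp (b / 4 * r) := by
    have h2 := Real.add_one_le_exp (b / 4 * r)
    have h3 : 1 ≤ Real.exp (b / 4 * r) := Real.one_le_exp (by positivity)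
    have h4 : r = 4 / b * (b / 4 * r) := by field_simp
    have h5 : 4 / b * (b / 4 * r) ≤ 4 / b * Real.exp (b / 4 * r) := by
      gcongr; linarith
    linarith
  rw [norm_mul, norm_mul, Real.norm_eq_abs, Real.norm_of_nonneg (by positivity : 0 ≤ (1 + r) ^ 2),
    Real.norm_of_nonneg (Real.exp_pos _).le, mul_assoc, mul_assoc]
  refine mul_le_mul_of_nonneg_left ?_ (abs_nonneg C)
  calc (1 + r) ^ 2 * Real.exp (-b * r)
      ≤ ((1 + 4 / b) * Real.exp (b / 4 * r)) ^ 2 * Real.exp (-b * r) := by gcongr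
    _ = (1 + 4 / b) ^ 2 * Real.exp (-(b / 2) * r) := by
        rw [mul_pow, mul_assoc, ← Real.exp_nat_mul, ← Real.exp_add]
        congr 2; push_cast; ring

lemma hs_laplacian_radial (d : ℕ) (g g1 g2 : ℝ → ℝ) (hg : ∀ r, HasDerivAt g (g1 r) r)
    (hg1 : ∀ r, HasDerivAt g1 (g2 r) r) (x z : EuclideanSpace ℝ (Fin d)) :
    laplacian d (fun y => g (‖y - x‖ ^ 2)) z
      = 4 * ‖z - x‖ ^ 2 * g2 (‖z - x‖ ^ 2) + 2 * d * g1 (‖z - x‖ ^ 2) := by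
  have hN : ∀ y : EuclideanSpace ℝ (Fin d), HasFDerivAt
      (fun y : EuclideanSpace ℝ (Fin d) => ‖y - x‖ ^ 2) (2 • (innerSL ℝ (y - x))) y := by
    intro y
    simpa using ((hasFDerivAt_id y).sub_const x).norm_sq
  have h1 : ∀ (i : Fin d) (y : EuclideanSpace ℝ (Fin d)),
      fderiv ℝ (fun y : EuclideanSpace ℝ (Fin d) => g (‖y - x‖ ^ 2)) y (EuclideanSpace.single i 1)
        = g1 (‖y - x‖ ^ 2) * (2 * (y i - x i)) := by
    intro i y
    have h0 := ((hg _).comp_hasFDerivAt y (hN y)).fderiv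
    simp only [Function.comp_def] at h0
    rw [h0]
    simp [EuclideanSpace.inner_single_right]
  have h2 : ∀ i : Fin d, secondPartial d (fun y => g (‖y - x‖ ^ 2)) i i z
      = 4 * (z i - x i) ^ 2 * g2 (‖z - x‖ ^ 2) + 2 * g1 (‖z - x‖ ^ 2) := by
    intro i
    unfold secondPartial
    simp_rw [h1]
    have hp : HasFDerivAt (fun y : EuclideanSpace ℝ (Fin d) => y i)
        (EuclideanSpace.proj i : EuclideanSpace ℝ (Fin d) →L[ℝ] ℝ) z :=
      (EuclideanSpace.proj i : EuclideanSpace ℝ (Fin d) →L[ℝ] ℝ).hasFDerivAt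
    have h3 := ((hg1 _).comp_hasFDerivAt z (hN z)).mul ((hp.sub_const (x i)).const_mul 2)
    have h4 := h3.fderiv
    simp only [Function.comp_def] at h4
    erw [h4]
    simp [EuclideanSpace.inner_single_right]
    ring
  unfold laplacian
  simp_rw [h2]
  rw [Finset.sum_add_distrib, ← Finset.sum_mul, ← Finset.mul_sum, EuclideanSpace.norm_sq_eq]
  simp
  ring

lemma hs_bdd : ∃ M : ℝ, 0 ≤ M ∧ (∀ r, |deriv Real.smoothTransition r| ≤ M) ∧
    (∀ r, |deriv (deriv Real.smoothTransition) r| ≤ M) ∧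
    (∀ r, 1 < r → deriv Real.smoothTransition r = 0 ∧
      deriv (deriv Real.smoothTransition) r = 0) := by
  have hc2 : ContDiff ℝ 2 Real.smoothTransition := Real.smoothTransition.contDiff (n := 2)
  have hc1 : ContDiff ℝ 1 (deriv Real.smoothTransition) := by
    have : ContDiff ℝ (1 + 1) Real.smoothTransition := by simpa [one_add_one_eq_two] using hc2
    exact (contDiff_succ_iff_deriv.1 this).2.2
  have hz1 : ∀ r, 1 < r → deriv Real.smoothTransition r = 0 := by
    intro r hr
    have : Real.smoothTransition =ᶠ[𝓝 r] fun _ => 1 := by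
      filter_upwards [lt_mem_nhds hr] with y hy using Real.smoothTransition.one_of_one_le hy.le
    rw [this.deriv_eq]; simp
  have hz0 : ∀ r, r < 0 → deriv Real.smoothTransition r = 0 := by
    intro r hr
    have : Real.smoothTransition =ᶠ[𝓝 r] fun _ => 0 := by
      filter_upwards [gt_mem_nhds hr] with y hy using Real.smoothTransition.zero_of_nonpos hy.le
    rw [this.deriv_eq]; simp
  have hcs : HasCompactSupport (deriv Real.smoothTransition) := by
    refine HasCompactSupport.intro (isCompact_Icc (a := (0:ℝ)) (b := 1)) fun r hr => ?_
    by_cases h : r < 0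
    · exact hz0 r h
    · exact hz1 r (by by_contra h'; exact hr ⟨not_lt.1 h, not_lt.1 h'⟩)
  obtain ⟨M1, hM1⟩ := hcs.exists_bound_of_continuous hc1.continuous
  obtain ⟨M2, hM2⟩ := hcs.deriv.exists_bound_of_continuous (hc1.continuous_deriv le_rfl)
  refine ⟨max M1 M2, le_trans (norm_nonneg _) ((hM1 0).trans (le_max_left _ _)),
    fun r => (hM1 r).trans (le_max_left _ _), fun r => (hM2 r).trans (le_max_right _ _),
    fun r hr => ⟨hz1 r hr, ?_⟩⟩
  have : deriv Real.smoothTransition =ᶠ[𝓝 r] fun _ => 0 := by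
    filter_upwards [lt_mem_nhds hr] with y hy using hz1 y hy
  rw [this.deriv_eq]; simp

lemma hs_weak (d : ℕ) (f : EuclideanSpace ℝ (Fin d) → ℝ) (hfc : Continuous f)
    (ν : Measure (EuclideanSpace ℝ (Fin d))) (hνfin : IsLocallyFiniteMeasure ν)
    (hν : ∀ φ : EuclideanSpace ℝ (Fin d) → ℝ, ContDiff ℝ (⊤ : ℕ∞) φ → HasCompactSupport φ →
      (∫ x, φ x ∂ν) = (1 / 2) * ∫ x, f x * laplacian d φ x)
    (x : EuclideanSpace ℝ (Fin d)) (K : ℝ) (hK : ∀ y, |f (x + y)| ≤ K * (1 + ‖y‖ ^ 2))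
    (a : ℝ) (ha : 0 < a) :
    ∫ y, Real.exp (-a * ‖y - x‖ ^ 2) ∂ν
      = (1 / 2) * ∫ y, f (x + y) *
        ((4 * ‖y‖ ^ 2 * a ^ 2 - 2 * d * a) * Real.exp (-a * ‖y‖ ^ 2)) := by
  obtain ⟨M, hM0, hM1, hM2, hMz⟩ := hs_bdd
  have hK0 : 0 ≤ K := by simpa using (abs_nonneg _).trans (hK 0)
  have hc2 : ContDiff ℝ 2 Real.smoothTransition := Real.smoothTransition.contDiff (n := 2)
  have hc1 : ContDiff ℝ 1 (deriv Real.smoothTransition) := by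
    have : ContDiff ℝ (1 + 1) Real.smoothTransition := by simpa [one_add_one_eq_two] using hc2
    exact (contDiff_succ_iff_deriv.1 this).2.2
  have hcc : Continuous (deriv (deriv Real.smoothTransition)) := hc1.continuous_deriv le_rfl
  have hcc1 : Continuous (deriv Real.smoothTransition) := hc1.continuous
  have hcc0 : Continuous Real.smoothTransition := hc2.continuous
  set S := Real.smoothTransition with hS
  let g : ℕ → ℝ → ℝ := fun n r => S (n - r) * Real.exp (-a * r)
  let g1 : ℕ → ℝ → ℝ := fun n r => (-deriv S (n - r) - a * S (n - r)) * Real.exp (-a * r)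
  let g2 : ℕ → ℝ → ℝ := fun n r =>
    (deriv (deriv S) (n - r) + 2 * a * deriv S (n - r) + a ^ 2 * S (n - r)) * Real.exp (-a * r)
  have he : ∀ r : ℝ, HasDerivAt (fun r => Real.exp (-a * r)) (Real.exp (-a * r) * (-a)) r := by
    intro r
    simpa using ((hasDerivAt_id r).const_mul (-a)).exp
  have hsub : ∀ (n : ℕ) (r : ℝ), HasDerivAt (fun r : ℝ => (n : ℝ) - r) (-1) r := by
    intro n r
    simpa using (hasDerivAt_id r).const_sub (n : ℝ)
  have hS1 : ∀ (n : ℕ) (r : ℝ), HasDerivAt (fun r : ℝ => S (n - r)) (-deriv S (n - r)) r := by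
    intro n r
    have := ((hc2.differentiable (by norm_num)) ((n : ℝ) - r)).hasDerivAt.comp r (hsub n r)
    simpa [Function.comp_def] using this
  have hS2 : ∀ (n : ℕ) (r : ℝ),
      HasDerivAt (fun r : ℝ => deriv S (n - r)) (-deriv (deriv S) (n - r)) r := by
    intro n r
    have := ((hc1.differentiable (by norm_num)) ((n : ℝ) - r)).hasDerivAt.comp r (hsub n r)
    simpa [Function.comp_def] using this
  have hg1 : ∀ n r, HasDerivAt (g n) (g1 n r) r := by
    intro n r
    refine ((hS1 n r).mul (he r)).congr_deriv ?_
    simp only [g1]; ring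
  have hg2 : ∀ n r, HasDerivAt (g1 n) (g2 n r) r := by
    intro n r
    refine (((hS2 n r).neg.sub ((hS1 n r).const_mul a)).mul (he r)).congr_deriv ?_
    simp only [g2, Pi.neg_apply, Pi.sub_apply]; ring
  have hcont : ∀ n, Continuous fun y : EuclideanSpace ℝ (Fin d) => g n (‖y - x‖ ^ 2) := by
    intro n
    simp only [g]
    fun_prop
  have hsm : ∀ n, ContDiff ℝ (⊤ : ℕ∞)
      fun y : EuclideanSpace ℝ (Fin d) => g n (‖y - x‖ ^ 2) := by
    intro n
    have h1 : ContDiff ℝ (⊤ : ℕ∞) fun y : EuclideanSpace ℝ (Fin d) => ‖y - x‖ ^ 2 :=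
      (contDiff_id.sub contDiff_const).norm_sq ℝ
    have h2 : ContDiff ℝ (⊤ : ℕ∞) (g n) := by
      refine ((Real.smoothTransition.contDiff (n := ⊤)).comp
        (contDiff_const.sub contDiff_id)).mul ?_
      exact (contDiff_const.mul contDiff_id).exp
    exact h2.comp h1
  have hcs : ∀ n, HasCompactSupport
      fun y : EuclideanSpace ℝ (Fin d) => g n (‖y - x‖ ^ 2) := by
    intro n
    refine HasCompactSupport.intro (isCompact_closedBall x (n + 1)) fun y hy => ?_
    have h1 : (n : ℝ) + 1 < ‖y - x‖ := by simpa [dist_eq_norm] using hy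
    have h2 : (n : ℝ) - ‖y - x‖ ^ 2 ≤ 0 := by
      have : (0 : ℝ) ≤ n := n.cast_nonneg
      nlinarith
    simp [g, hS, Real.smoothTransition.zero_of_nonpos h2]
  have hid : ∀ n : ℕ, ∫ y, g n (‖y - x‖ ^ 2) ∂ν = (1 / 2) * ∫ y, f (x + y) *
      (4 * ‖y‖ ^ 2 * g2 n (‖y‖ ^ 2) + 2 * d * g1 n (‖y‖ ^ 2)) := by
    intro n
    rw [hν _ (hsm n) (hcs n)]
    simp_rw [hs_laplacian_radial d (g n) (g1 n) (g2 n) (hg1 n) (hg2 n) x]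
    rw [← integral_add_left_eq_self _ x]
    simp
  have hev : ∀ r : ℝ, ∀ᶠ n : ℕ in atTop, 1 < (n : ℝ) - r := by
    intro r
    filter_upwards [tendsto_natCast_atTop_atTop.eventually_gt_atTop (1 + r)] with n hn
    linarith
  have hlimR : Tendsto (fun n : ℕ => (1 / 2) * ∫ y, f (x + y) *
      (4 * ‖y‖ ^ 2 * g2 n (‖y‖ ^ 2) + 2 * d * g1 n (‖y‖ ^ 2))) atTop
      (𝓝 ((1 / 2) * ∫ y, f (x + y) *
        ((4 * ‖y‖ ^ 2 * a ^ 2 - 2 * d * a) * Real.exp (-a * ‖y‖ ^ 2)))) := by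
    refine Tendsto.const_mul _ ?_
    refine tendsto_integral_of_dominated_convergence
      (fun y => (K * (4 * (M + 2 * a * M + a ^ 2) + 2 * d * (M + a))) * (1 + ‖y‖ ^ 2) ^ 2 *
        Real.exp (-a * ‖y‖ ^ 2)) ?_ (hs_int_poly d ha _) ?_ ?_
    · intro n
      refine Continuous.aestronglyMeasurable ?_
      simp only [g1, g2]
      fun_prop
    · intro n
      refine Eventually.of_forall fun y => ?_
      have hr : 0 ≤ ‖y‖ ^ 2 := by positivity
      have hk := hK y
      rw [norm_mul, Real.norm_eq_abs, Real.norm_eq_abs]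
      generalize ‖y‖ ^ 2 = r at hr hk
      have hSb : |S (n - r)| ≤ 1 := by
        rw [abs_of_nonneg (Real.smoothTransition.nonneg _)]
        exact Real.smoothTransition.le_one _
      have e1 : |g1 n r| ≤ (M + a) * Real.exp (-a * r) := by
        simp only [g1]
        rw [abs_mul, Real.abs_exp]
        gcongr
        refine (abs_sub _ _).trans ?_
        rw [abs_neg, abs_mul, abs_of_pos ha]
        have := hM1 (n - r)
        nlinarith
      have e2 : |g2 n r| ≤ (M + 2 * a * M + a ^ 2) * Real.exp (-a * r) := by
        simp only [g2]
        rw [abs_mul, Real.abs_exp]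
        gcongr
        refine (abs_add_three _ _ _).trans ?_
        rw [abs_mul, abs_mul (a ^ 2), abs_of_pos (by positivity : 0 < 2 * a),
          abs_of_pos (by positivity : 0 < a ^ 2)]
        have h1 := hM1 (n - r)
        have h2 := hM2 (n - r)
        have h3 : 2 * a * |deriv S (n - r)| ≤ 2 * a * M := by gcongr
        have h4 : a ^ 2 * |S (n - r)| ≤ a ^ 2 * 1 := by gcongr
        linarith
      have e3 : |4 * r * g2 n r + 2 * d * g1 n r| ≤
          (4 * (M + 2 * a * M + a ^ 2) + 2 * d * (M + a)) * (1 + r) * Real.exp (-a * r) := by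
        refine (abs_add_le _ _).trans ?_
        rw [abs_mul (4 * r), abs_mul (2 * (d : ℝ)), abs_of_nonneg (by positivity : 0 ≤ 4 * r),
          abs_of_nonneg (by positivity : (0:ℝ) ≤ 2 * d)]
        have h1 : 4 * r * |g2 n r| ≤ 4 * (1 + r) * ((M + 2 * a * M + a ^ 2) * Real.exp (-a * r)) := by
          gcongr; linarith
        have h2 : 2 * d * |g1 n r| ≤ 2 * d * (1 + r) * ((M + a) * Real.exp (-a * r)) := by
          refine mul_le_mul ?_ e1 (abs_nonneg _) (by positivity)
          nlinarith [mul_nonneg (Nat.cast_nonneg d : (0:ℝ) ≤ d) hr]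
        linarith
      calc _ ≤ (K * (1 + r)) * ((4 * (M + 2 * a * M + a ^ 2) + 2 * d * (M + a)) * (1 + r) *
              Real.exp (-a * r)) := by gcongr
        _ = _ := by ring
    · refine Eventually.of_forall fun y => ?_
      refine tendsto_const_nhds.congr' ?_
      filter_upwards [hev (‖y‖ ^ 2)] with n hn
      obtain ⟨h1, h2⟩ := hMz _ hn
      have h3 : S (n - ‖y‖ ^ 2) = 1 := Real.smoothTransition.one_of_one_le hn.le
      simp only [g1, g2, h1, h2, h3]
      ring
  have hg0 : ∀ n r, 0 ≤ g n r := fun n r =>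
    mul_nonneg (Real.smoothTransition.nonneg _) (Real.exp_pos _).le
  have hlimL : Tendsto (fun n : ℕ => ∫⁻ y, ENNReal.ofReal (g n (‖y - x‖ ^ 2)) ∂ν) atTop
      (𝓝 (∫⁻ y, ENNReal.ofReal (Real.exp (-a * ‖y - x‖ ^ 2)) ∂ν)) := by
    refine lintegral_tendsto_of_tendsto_of_monotone
      (fun n => (hcont n).measurable.ennreal_ofReal.aemeasurable) ?_ ?_
    · refine Eventually.of_forall fun y n m hnm => ENNReal.ofReal_le_ofReal ?_
      refine mul_le_mul_of_nonneg_right (Real.smoothTransition.monotone ?_) (Real.exp_pos _).le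
      have : (n : ℝ) ≤ m := by exact_mod_cast hnm
      linarith
    · refine Eventually.of_forall fun y => tendsto_const_nhds.congr' ?_
      filter_upwards [hev (‖y - x‖ ^ 2)] with n hn
      have h3 : S (n - ‖y - x‖ ^ 2) = 1 := Real.smoothTransition.one_of_one_le hn.le
      simp [g, h3]
  have hlimL' : Tendsto (fun n : ℕ => ∫⁻ y, ENNReal.ofReal (g n (‖y - x‖ ^ 2)) ∂ν) atTop
      (𝓝 (ENNReal.ofReal ((1 / 2) * ∫ y, f (x + y) *
        ((4 * ‖y‖ ^ 2 * a ^ 2 - 2 * d * a) * Real.exp (-a * ‖y‖ ^ 2))))) := by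
    refine (ENNReal.tendsto_ofReal hlimR).congr fun n => ?_
    rw [← hid n, ofReal_integral_eq_lintegral_ofReal
      ((hcont n).integrable_of_hasCompactSupport (hcs n)) (Eventually.of_forall fun y => hg0 _ _)]
  have hR0 : 0 ≤ (1 / 2) * ∫ y, f (x + y) *
        ((4 * ‖y‖ ^ 2 * a ^ 2 - 2 * d * a) * Real.exp (-a * ‖y‖ ^ 2)) := by
    refine ge_of_tendsto' hlimR fun n => ?_
    rw [← hid n]
    exact integral_nonneg fun y => hg0 _ _
  rw [integral_eq_lintegral_of_nonneg_ae (Eventually.of_forall fun y => (Real.exp_pos _).le)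
    (Continuous.aestronglyMeasurable (by fun_prop)), tendsto_nhds_unique hlimL hlimL',
    ENNReal.toReal_ofReal hR0]

lemma hs_kernel_deriv (d : ℕ) (y : EuclideanSpace ℝ (Fin d)) {s : ℝ} (hs : 0 < s) :
    HasDerivAt (fun s => heatKernel d s y)
      ((‖y‖ ^ 2 / (2 * s ^ 2) - d / (2 * s)) * heatKernel d s y) s := by
  have hp : 0 < 2 * Real.pi * s := by positivity
  have h1 : HasDerivAt (fun s : ℝ => 2 * Real.pi * s) (2 * Real.pi) s := by
    simpa using (hasDerivAt_id s).const_mul (2 * Real.pi)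
  have h2 := h1.rpow_const (p := -(d : ℝ) / 2) (Or.inl hp.ne')
  have h3 : HasDerivAt (fun s : ℝ => -‖y‖ ^ 2 / (2 * s)) (‖y‖ ^ 2 / (2 * s ^ 2)) s := by
    have h4 : HasDerivAt (fun s : ℝ => 2 * s) 2 s := by
      simpa using (hasDerivAt_id s).const_mul 2
    refine ((hasDerivAt_const s (-‖y‖ ^ 2)).div h4 (by positivity)).congr_deriv ?_
    field_simp
    ring
  refine (h2.mul h3.exp).congr_deriv ?_
  unfold heatKernel
  rw [Real.rpow_sub hp, Real.rpow_one]
  field_simp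
  ring

lemma hs_kernel_cont (d : ℕ) (s : ℝ) : Continuous (heatKernel d s) := by
  unfold heatKernel
  fun_prop

lemma hs_u_deriv (d : ℕ) (F : EuclideanSpace ℝ (Fin d) → ℝ) (hF : Continuous F)
    (K : ℝ) (hK : ∀ y, |F y| ≤ K * (1 + ‖y‖ ^ 2)) {s : ℝ} (hs : 0 < s) :
    HasDerivAt (fun s => ∫ y, F y * heatKernel d s y)
      (∫ y, F y * ((‖y‖ ^ 2 / (2 * s ^ 2) - d / (2 * s)) * heatKernel d s y)) s := by
  have hK0 : 0 ≤ K := by simpa using (abs_nonneg _).trans (hK 0)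
  have hc := hs_kernel_cont d
  have hkey : ∀ (y : EuclideanSpace ℝ (Fin d)), ∀ r ∈ Set.Ioo (s / 2) (2 * s),
      0 ≤ heatKernel d r y ∧ heatKernel d r y ≤
        (2 * Real.pi * (s / 2)) ^ (-(d : ℝ) / 2) * Real.exp (-(1 / (4 * s)) * ‖y‖ ^ 2) := by
    intro y r hr
    have hr0 : 0 < r := lt_trans (by positivity) hr.1
    unfold heatKernel
    refine ⟨by positivity, ?_⟩
    refine mul_le_mul ?_ ?_ (Real.exp_pos _).le (by positivity)
    · refine Real.rpow_le_rpow_of_nonpos (by positivity) ?_ ?_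
      · have := hr.1; gcongr
      · have : (0 : ℝ) ≤ d := d.cast_nonneg
        linarith
    · refine Real.exp_le_exp.2 ?_
      have h1 : 1 / (4 * s) ≤ 1 / (2 * r) := by
        apply one_div_le_one_div_of_le (by positivity); linarith [hr.2]
      have h2 : -‖y‖ ^ 2 / (2 * r) = -(1 / (2 * r)) * ‖y‖ ^ 2 := by ring
      rw [h2]
      have : 0 ≤ ‖y‖ ^ 2 := by positivity
      nlinarith
  have hsm : s ∈ Set.Ioo (s / 2) (2 * s) := ⟨by linarith, by linarith⟩
  set c := (2 * Real.pi * (s / 2)) ^ (-(d : ℝ) / 2) with hcdef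
  have hc0 : 0 ≤ c := by positivity
  refine (hasDerivAt_integral_of_dominated_loc_of_deriv_le
    (s := Set.Ioo (s / 2) (2 * s))
    (F' := fun r y => F y * ((‖y‖ ^ 2 / (2 * r ^ 2) - d / (2 * r)) * heatKernel d r y))
    (bound := fun y => (K * (2 / s ^ 2 + d / s) * c) * (1 + ‖y‖ ^ 2) ^ 2 *
      Real.exp (-(1 / (4 * s)) * ‖y‖ ^ 2))
    (Ioo_mem_nhds hsm.1 hsm.2) ?_ ?_ ?_ ?_ ?_ ?_).2
  · exact Eventually.of_forall fun r => (hF.mul (hc r)).aestronglyMeasurable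
  · refine (hs_int_poly d (by positivity : 0 < 1 / (4 * s)) (K * c)).mono'
      (hF.mul (hc s)).aestronglyMeasurable (Eventually.of_forall fun y => ?_)
    obtain ⟨h1, h2⟩ := hkey y s hsm
    rw [norm_mul, Real.norm_eq_abs, Real.norm_of_nonneg h1]
    have h3 : 0 ≤ ‖y‖ ^ 2 := by positivity
    calc |F y| * heatKernel d s y ≤ (K * (1 + ‖y‖ ^ 2)) *
          (c * Real.exp (-(1 / (4 * s)) * ‖y‖ ^ 2)) := by
            gcongr; exact hK y
      _ ≤ (K * (1 + ‖y‖ ^ 2) ^ 2) * (c * Real.exp (-(1 / (4 * s)) * ‖y‖ ^ 2)) := by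
            gcongr; nlinarith
      _ = _ := by ring
  · refine Continuous.aestronglyMeasurable ?_
    have := hc s
    fun_prop
  · refine Eventually.of_forall fun y r hr => ?_
    obtain ⟨h1, h2⟩ := hkey y r hr
    have hr0 : 0 < r := lt_trans (by positivity) hr.1
    have h3 : 0 ≤ ‖y‖ ^ 2 := by positivity
    have h4 : |‖y‖ ^ 2 / (2 * r ^ 2) - d / (2 * r)| ≤ (2 / s ^ 2 + d / s) * (1 + ‖y‖ ^ 2) := by
      refine (abs_sub _ _).trans ?_
      rw [abs_of_nonneg (by positivity), abs_of_nonneg (by positivity)]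
      have h5 : ‖y‖ ^ 2 / (2 * r ^ 2) ≤ 2 / s ^ 2 * ‖y‖ ^ 2 := by
        have : 2 / s ^ 2 * ‖y‖ ^ 2 = ‖y‖ ^ 2 / (2 * (s / 2) ^ 2) := by field_simp
        rw [this]
        have := hr.1
        gcongr
      have h6 : d / (2 * r) ≤ d / s := by
        have := hr.1
        gcongr
        linarith
      have h7 : (0 : ℝ) ≤ d / s := by positivity
      have h8 : 0 ≤ 2 / s ^ 2 := by positivity
      nlinarith
    rw [norm_mul, norm_mul, Real.norm_eq_abs, Real.norm_eq_abs, Real.norm_of_nonneg h1]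
    calc _ ≤ (K * (1 + ‖y‖ ^ 2)) * (((2 / s ^ 2 + d / s) * (1 + ‖y‖ ^ 2)) *
          (c * Real.exp (-(1 / (4 * s)) * ‖y‖ ^ 2))) := by
            gcongr; exact hK y
      _ = _ := by ring
  · exact hs_int_poly d (by positivity) _
  · refine Eventually.of_forall fun y r hr => ?_
    exact (hs_kernel_deriv d y (lt_trans (by positivity) hr.1)).const_mul (F y)

lemma hs_scale (d : ℕ) (F : EuclideanSpace ℝ (Fin d) → ℝ) {s : ℝ} (hs : 0 < s) :
    ∫ y, F (√s • y) * heatKernel d 1 y = ∫ y, F y * heatKernel d s y := by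
  have h := Measure.integral_comp_smul_of_nonneg (volume : Measure (EuclideanSpace ℝ (Fin d)))
    (fun y => F y * heatKernel d s y) (√s) (hR := Real.sqrt_nonneg s)
  have hk : ∀ y : EuclideanSpace ℝ (Fin d),
      heatKernel d s (√s • y) = (√s ^ d)⁻¹ * heatKernel d 1 y := by
    intro y
    unfold heatKernel
    have h1 : √s ^ d = s ^ ((d : ℝ) / 2) := by
      rw [Real.sqrt_eq_rpow, ← Real.rpow_natCast, ← Real.rpow_mul hs.le]
      congr 1; ring
    rw [h1, Real.mul_rpow (by positivity) hs.le, neg_div, Real.rpow_neg hs.le, norm_smul, mul_pow,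
      Real.norm_of_nonneg (Real.sqrt_nonneg s), Real.sq_sqrt hs.le]
    have h2 : -(s * ‖y‖ ^ 2) / (2 * s) = -‖y‖ ^ 2 / (2 * 1) := by field_simp
    rw [h2, mul_one (2 * Real.pi)]
    ring
  have hpos : (√s ^ d)⁻¹ ≠ 0 := by positivity
  simp only [hk, finrank_euclideanSpace_fin, smul_eq_mul] at h
  have h' : ∫ y, F (√s • y) * ((√s ^ d)⁻¹ * heatKernel d 1 y)
      = (√s ^ d)⁻¹ * ∫ y, F (√s • y) * heatKernel d 1 y := by
    rw [← integral_const_mul]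
    congr 1; ext y; ring
  rw [h'] at h
  exact mul_left_cancel₀ hpos h

lemma hs_mass (d : ℕ) : ∫ y, heatKernel d 1 y = 1 := by
  unfold heatKernel
  have h := GaussianFourier.integral_rexp_neg_mul_sq_norm (V := EuclideanSpace ℝ (Fin d))
    (b := 1 / 2) (by norm_num)
  rw [integral_const_mul]
  have h2 : ∀ v : EuclideanSpace ℝ (Fin d), -‖v‖ ^ 2 / (2 * 1) = -(1 / 2) * ‖v‖ ^ 2 := by
    intro v; ring
  simp_rw [h2]
  rw [h, finrank_euclideanSpace_fin, neg_div, Real.rpow_neg (by positivity)]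
  have h3 : Real.pi / (1 / 2) = 2 * Real.pi * 1 := by ring
  rw [h3]
  exact inv_mul_cancel₀ (by positivity)

lemma hs_cont (d : ℕ) (F : EuclideanSpace ℝ (Fin d) → ℝ) (hF : Continuous F)
    (K : ℝ) (hK : ∀ y, |F y| ≤ K * (1 + ‖y‖ ^ 2)) (t : ℝ) :
    ContinuousOn (fun s => ∫ y, F (√s • y) * heatKernel d 1 y) (Set.Icc 0 t) := by
  have hK0 : 0 ≤ K := by simpa using (abs_nonneg _).trans (hK 0)
  have hc := hs_kernel_cont d 1
  refine continuousOn_of_dominated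
    (bound := fun y => (K * (1 + t) * (2 * Real.pi * 1) ^ (-(d : ℝ) / 2)) * (1 + ‖y‖ ^ 2) ^ 2 *
      Real.exp (-(1 / 2) * ‖y‖ ^ 2)) ?_ ?_ (hs_int_poly d (by norm_num) _) ?_
  · intro s _
    exact Continuous.aestronglyMeasurable (by fun_prop)
  · intro s hs
    refine Eventually.of_forall fun y => ?_
    have h1 : |F (√s • y)| ≤ K * ((1 + t) * (1 + ‖y‖ ^ 2) ^ 2) := by
      refine (hK _).trans ?_
      rw [norm_smul, mul_pow, Real.norm_of_nonneg (Real.sqrt_nonneg s), Real.sq_sqrt hs.1]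
      have h3 : 0 ≤ ‖y‖ ^ 2 := by positivity
      generalize ‖y‖ ^ 2 = r at h3
      have h0 := hs.1.trans hs.2
      refine mul_le_mul_of_nonneg_left ?_ hK0
      have h4 : s * r ≤ t * r := mul_le_mul_of_nonneg_right hs.2 h3
      have h5 : 0 ≤ t * r := by positivity
      have h6 : 0 ≤ t * r ^ 2 := by positivity
      nlinarith
    have h2 : 0 ≤ heatKernel d 1 y := by unfold heatKernel; positivity
    rw [norm_mul, Real.norm_eq_abs, Real.norm_of_nonneg h2]
    refine (mul_le_mul_of_nonneg_right h1 h2).trans (le_of_eq ?_)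
    unfold heatKernel
    have h3 : -‖y‖ ^ 2 / (2 * 1) = -(1 / 2) * ‖y‖ ^ 2 := by ring
    rw [h3]; ring
  · exact Eventually.of_forall fun y => Continuous.continuousOn (by fun_prop)

theorem heat_semigroup_increment_formula (d : ℕ)
    (f : EuclideanSpace ℝ (Fin d) → ℝ) (hf : ConvexOn ℝ Set.univ f)
    (A B : ℝ) (hgrowth : ∀ y, |f y| ≤ A * ‖y‖ + B)
    (ν : Measure (EuclideanSpace ℝ (Fin d))) (hνfin : IsLocallyFiniteMeasure ν)
    (hν : ∀ φ : EuclideanSpace ℝ (Fin d) → ℝ, ContDiff ℝ (⊤ : ℕ∞) φ → HasCompactSupport φ →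
      (∫ x, φ x ∂ν) = (1 / 2) * ∫ x, f x * laplacian d φ x) :
    ∀ᵐ x ∂(volume : Measure (EuclideanSpace ℝ (Fin d))), ∀ t : ℝ, 0 < t →
      (1 / t) * ((∫ y, f (x + y) * heatKernel d t y) - f x) =
        (1 / t) * ∫ s in (0:ℝ)..t, ∫ y, heatKernel d s (x - y) ∂ν := by
  refine Eventually.of_forall fun x t ht => ?_
  have hfc : Continuous f := hf.locallyLipschitz.continuous
  have hF : Continuous fun y => f (x + y) := by fun_prop
  obtain ⟨K, hK⟩ : ∃ K : ℝ, ∀ y, |f (x + y)| ≤ K * (1 + ‖y‖ ^ 2) := by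
    refine ⟨|A| * (‖x‖ + 1) + |B|, fun y => (hgrowth _).trans ?_⟩
    have h1 : A * ‖x + y‖ ≤ |A| * (‖x‖ + ‖y‖) :=
      mul_le_mul (le_abs_self A) (norm_add_le _ _) (norm_nonneg _) (abs_nonneg A)
    have h2 : ‖x‖ + ‖y‖ ≤ (‖x‖ + 1) * (1 + ‖y‖ ^ 2) := by
      nlinarith [norm_nonneg x, norm_nonneg y, sq_nonneg (‖y‖ - 1), sq_nonneg ‖y‖,
        mul_nonneg (norm_nonneg x) (sq_nonneg ‖y‖)]
    have h3 := mul_le_mul_of_nonneg_left h2 (abs_nonneg A)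
    have h4 := le_abs_self B
    have h5 : 0 ≤ |B| * ‖y‖ ^ 2 := by positivity
    nlinarith
  congr 1
  set u : ℝ → ℝ := fun s => ∫ y, f (x + √s • y) * heatKernel d 1 y with hu
  have hucont : ContinuousOn u (Set.Icc 0 t) := hs_cont d (fun y => f (x + y)) hF K hK t
  have hus : ∀ s, 0 < s → u s = ∫ y, f (x + y) * heatKernel d s y :=
    fun s hs => hs_scale d (fun y => f (x + y)) hs
  have hder : ∀ s ∈ Set.Ioo 0 t, HasDerivAt u (∫ y, heatKernel d s (x - y) ∂ν) s := by
    intro s hs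
    have h0 := hs.1
    have h1 := hs_u_deriv d (fun y => f (x + y)) hF K hK h0
    have h2 := h1.congr_of_eventuallyEq (f₁ := u)
      (by filter_upwards [lt_mem_nhds h0] with r hr using hus r hr)
    refine h2.congr_deriv ?_
    have h3 := hs_weak d f hfc ν hνfin hν x K hK (1 / (2 * s)) (by positivity)
    have h4 : ∀ y, heatKernel d s (x - y) = (2 * Real.pi * s) ^ (-(d : ℝ) / 2) *
        Real.exp (-(1 / (2 * s)) * ‖y - x‖ ^ 2) := by
      intro y
      unfold heatKernel
      rw [norm_sub_rev]
      congr 2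
      ring
    simp_rw [h4]
    rw [integral_const_mul, h3, ← integral_const_mul, ← integral_const_mul]
    congr 1
    ext y
    unfold heatKernel
    have h5 : -‖y‖ ^ 2 / (2 * s) = -(1 / (2 * s)) * ‖y‖ ^ 2 := by ring
    rw [h5]
    field_simp
    ring
  have hnn : ∀ s ∈ Set.Ioo 0 t, 0 ≤ ∫ y, heatKernel d s (x - y) ∂ν := by
    intro s hs
    have h0 := hs.1
    refine integral_nonneg fun y => ?_
    simp only [heatKernel, Pi.zero_apply]
    positivity
  have hint := intervalIntegral.integrableOn_deriv_of_nonneg hucont hder hnn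
  rw [intervalIntegral.integral_eq_sub_of_hasDerivAt_of_le ht.le hucont hder
    ((intervalIntegrable_iff_integrableOn_Ioc_of_le ht.le).2 hint), hus t ht]
  congr 1
  simp [hu, integral_const_mul, hs_mass]
end

section
/- (Alexandrov in one dimension.) Let f : ℝ → ℝ be a convex function. Then for Lebesgue-almost every x ∈ ℝ there exist real numbers p and q such that lim_{r → 0} (f(x + r) − f(x) − p r − (q/2) r²)/r² = 0; that is, f is twice differentiable in the Peano sense at almost every point. -/
open Filter
open scoped Topology

/-- Alexandrov's theorem in one dimension: a convex function on `ℝ` is twice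
differentiable in the Peano sense at Lebesgue-almost every point. -/
theorem alexandrov_one_dim (f : ℝ → ℝ) (hf : ConvexOn ℝ Set.univ f) :
    ∀ᵐ x ∂(MeasureTheory.volume : MeasureTheory.Measure ℝ),
      ∃ p q : ℝ,
        Filter.Tendsto
          (fun r : ℝ => (f (x + r) - f x - p * r - (q / 2) * r ^ 2) / r ^ 2)
          (nhdsWithin 0 {(0 : ℝ)}ᶜ) (nhds 0) := by
  have hcont : Continuous f := by
    have := hf.continuousOn_interior
    rwa [interior_univ, continuousOn_univ] at this
  obtain ⟨g, hg⟩ : ∃ g : ℝ → ℝ, g = fun y => derivWithin f (Set.Ioi y) y := ⟨_, rfl⟩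
  have hder : ∀ y, HasDerivWithinAt f (g y) (Set.Ici y) y := by
    intro y
    rw [hg]
    exact (hf.hasDerivWithinAt_rightDeriv_of_mem_interior (by simp)).Ici_of_Ioi
  have hmono : Monotone g := by
    have := hf.monotoneOn_rightDeriv
    rw [interior_univ, monotoneOn_univ] at this
    rw [hg]; exact this
  filter_upwards [hmono.ae_differentiableAt] with x hx
  refine ⟨g x, deriv g x, ?_⟩
  have hd := hx.hasDerivAt
  generalize deriv g x = q at hd
  rw [hasDerivAt_iff_isLittleO_nhds_zero] at hd
  rw [Metric.tendsto_nhdsWithin_nhds]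
  intro ε hε
  have hd' := hd.def (half_pos hε)
  rw [Metric.eventually_nhds_iff] at hd'
  obtain ⟨δ, hδ, hb⟩ := hd'
  refine ⟨δ, hδ, ?_⟩
  intro r hr0 hr
  have hr0 : r ≠ 0 := hr0
  obtain ⟨h, hh⟩ : ∃ h : ℝ → ℝ,
      h = fun y => f y - f x - g x * (y - x) - q / 2 * (y - x) ^ 2 := ⟨_, rfl⟩
  have hhc : Continuous h := by rw [hh]; fun_prop
  have hhd : ∀ y, HasDerivWithinAt h (g y - g x - q * (y - x)) (Set.Ici y) y := by
    intro y
    rw [hh]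
    have h1 : HasDerivAt (fun y => g x * (y - x)) (g x) y := by
      simpa using ((hasDerivAt_id y).sub_const x).const_mul (g x)
    have h2 : HasDerivAt (fun y => q / 2 * (y - x) ^ 2) (q * (y - x)) y := by
      have := (((hasDerivAt_id y).sub_const x).pow 2).const_mul (q / 2)
      refine this.congr_deriv ?_
      simp; ring
    exact (((hder y).sub_const (f x)).sub h1.hasDerivWithinAt).sub h2.hasDerivWithinAt
  have hbound : ∀ y, |y - x| ≤ |r| → ‖g y - g x - q * (y - x)‖ ≤ ε / 2 * |r| := by
    intro y hy
    have hrr : |r| < δ := by simpa using hr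
    have h3 := hb (y := y - x) (by simpa using hy.trans_lt hrr)
    simp only [add_sub_cancel, smul_eq_mul] at h3
    rw [mul_comm q]
    refine h3.trans ?_
    rw [Real.norm_eq_abs]
    gcongr
  have hx0 : h x = 0 := by simp [hh]
  have key : |h (x + r)| ≤ ε / 2 * |r| * |r| := by
    rcases lt_or_gt_of_ne hr0 with hneg | hpos
    · have := norm_image_sub_le_of_norm_deriv_right_le_segment (f := h) (a := x + r) (b := x)
        (C := ε / 2 * |r|) hhc.continuousOn (fun y _ => hhd y)
        (fun y hy => hbound y (by
          rw [abs_of_neg hneg, abs_of_nonpos (by linarith [hy.2])]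
          linarith [hy.1])) x ⟨by linarith, le_rfl⟩
      rw [hx0, zero_sub, norm_neg, Real.norm_eq_abs] at this
      rw [show x - (x + r) = |r| by rw [abs_of_neg hneg]; ring] at this
      exact this
    · have := norm_image_sub_le_of_norm_deriv_right_le_segment (f := h) (a := x) (b := x + r)
        (C := ε / 2 * |r|) hhc.continuousOn (fun y _ => hhd y)
        (fun y hy => hbound y (by
          rw [abs_of_pos hpos, abs_of_nonneg (by linarith [hy.1])]
          linarith [hy.2])) (x + r) ⟨by linarith, le_rfl⟩
      rw [hx0, sub_zero, Real.norm_eq_abs] at this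
      rw [show x + r - x = |r| by rw [abs_of_pos hpos]; ring] at this
      exact this
  have hval : h (x + r) = f (x + r) - f x - g x * r - q / 2 * r ^ 2 := by
    simp [hh]
  rw [← hval, dist_zero_right, Real.norm_eq_abs, abs_div, abs_of_pos (a := r ^ 2) (by positivity),
    div_lt_iff₀ (by positivity)]
  have : |r| * |r| = r ^ 2 := by rw [abs_mul_abs_self]; ring
  have hp : 0 < r ^ 2 := by positivity
  nlinarith
end

section
/- For each dimension n ≥ 1 there exists a constant C > 0 (depending only on n) such that: for every nonnegative function g : ℝⁿ → ℝ with g(0) = 0 that is Lipschitz on the closed unit ball B(1) with Lipschitz constant L on B(1), one has sup_{B(1)} g ≤ C (∫_{B(1)} g(x) dx)^{1/(n+1)} · L^{n/(n+1)}. -/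
open MeasureTheory Filter Metric
open scoped Topology ENNReal NNReal

/-- A supremum bound on the unit ball by an interpolation between the integral and the
Lipschitz constant. -/
theorem sup_le_integral_lipschitz_interpolation (n : ℕ) (hn : 1 ≤ n) :
    ∃ C : ℝ, 0 < C ∧
      ∀ (g : EuclideanSpace ℝ (Fin n) → ℝ) (L : ℝ), 0 ≤ L →
        (∀ y, 0 ≤ g y) → g 0 = 0 →
        LipschitzOnWith (Real.toNNReal L) g (Metric.closedBall 0 1) →
        sSup (g '' Metric.closedBall 0 1) ≤
          C * (∫ x in Metric.closedBall (0 : EuclideanSpace ℝ (Fin n)) 1, g x) ^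
              (1 / ((n : ℝ) + 1)) *
            L ^ ((n : ℝ) / ((n : ℝ) + 1)) := by
  set v : ℝ := (volume : Measure (EuclideanSpace ℝ (Fin n))).real (ball 0 1) with hv
  have hvpos : 0 < v := by
    rw [hv, measureReal_def]
    exact ENNReal.toReal_pos (measure_ball_pos _ _ one_pos).ne' measure_ball_lt_top.ne
  set K : ℝ := 2 * 4 ^ n / v with hK
  have hKpos : 0 < K := by positivity
  refine ⟨K ^ (1 / ((n : ℝ) + 1)), by positivity, ?_⟩
  intro g L hL hg g0 hLip
  set I : ℝ := ∫ x in closedBall (0 : EuclideanSpace ℝ (Fin n)) 1, g x with hI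
  have hI0 : 0 ≤ I := integral_nonneg hg
  have hint : IntegrableOn g (closedBall (0 : EuclideanSpace ℝ (Fin n)) 1) :=
    hLip.continuousOn.integrableOn_compact (isCompact_closedBall _ _)
  apply csSup_le
  · exact ⟨g 0, 0, by simp, rfl⟩
  rintro _ ⟨y, hy, rfl⟩
  have hdist : ∀ a ∈ closedBall (0 : EuclideanSpace ℝ (Fin n)) 1,
      g y - g a ≤ L * ‖y - a‖ := by
    intro a ha
    have h := hLip.dist_le_mul y hy a ha
    rw [Real.coe_toNNReal _ hL, Real.dist_eq, dist_eq_norm] at h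
    exact (le_abs_self _).trans h
  have hy1 : ‖y‖ ≤ 1 := by simpa using hy
  have hML : g y ≤ L := by
    have h := hdist 0 (by simp)
    rw [g0, sub_zero, sub_zero] at h
    nlinarith
  rcases (hg y).eq_or_lt with h0 | hM
  · rw [← h0]; positivity
  have hLpos : 0 < L := hM.trans_le hML
  set M := g y with hMdef
  set r : ℝ := M / (4 * L) with hr
  have hrpos : 0 < r := by positivity
  have hrL : L * r = M / 4 := by rw [hr]; field_simp
  have hr1 : r ≤ 1 := by
    rw [hr, div_le_one (by positivity)]; linarith
  set z := (1 - r) • y with hz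
  have hzn : ‖z‖ ≤ 1 - r := by
    rw [hz, norm_smul, Real.norm_of_nonneg (by linarith)]
    nlinarith
  have hyz : ‖y - z‖ ≤ r := by
    have : y - z = r • y := by rw [hz]; module
    rw [this, norm_smul, Real.norm_of_nonneg hrpos.le]
    nlinarith
  have hsub : closedBall z r ⊆ closedBall (0 : EuclideanSpace ℝ (Fin n)) 1 := by
    apply closedBall_subset_closedBall'
    rw [dist_zero_right]; linarith
  have hlow : ∀ x ∈ closedBall z r, M / 2 ≤ g x := by
    intro x hx
    have h1 := hdist x (hsub hx)
    have h2 : ‖z - x‖ ≤ r := by rwa [mem_closedBall', dist_eq_norm] at hx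
    have h3 : ‖y - x‖ ≤ 2 * r := by
      have := norm_add_le (y - z) (z - x)
      rw [sub_add_sub_cancel] at this
      linarith
    nlinarith
  have hvol : (volume : Measure (EuclideanSpace ℝ (Fin n))).real (closedBall z r) = r ^ n * v := by
    rw [Measure.addHaar_real_closedBall _ _ hrpos.le, finrank_euclideanSpace_fin]
  have hIlow : M / 2 * (r ^ n * v) ≤ I := by
    rw [← hvol]
    calc _ = ∫ x in closedBall z r, M / 2 := by simp [mul_comm]
      _ ≤ ∫ x in closedBall z r, g x := by
        apply setIntegral_mono_on _ (hint.mono_set hsub) measurableSet_closedBall hlow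
        exact integrableOn_const measure_closedBall_lt_top.ne
      _ ≤ I := setIntegral_mono_set hint (ae_of_all _ hg) (ae_of_all _ hsub)
  have hpow : M ^ (n + 1) ≤ K * I * L ^ n := by
    have : M ^ (n + 1) = K * (M / 2 * (r ^ n * v)) * L ^ n := by
      rw [hK, hr, div_pow, mul_pow, pow_succ]; field_simp
    rw [this]; gcongr
  have hn1 : ((n : ℝ) + 1) ≠ 0 := by positivity
  calc M = (M ^ (n + 1)) ^ (1 / ((n : ℝ) + 1)) := by
        rw [← Real.rpow_natCast, ← Real.rpow_mul hM.le]; push_cast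
        rw [mul_one_div_cancel hn1, Real.rpow_one]
    _ ≤ (K * I * L ^ n) ^ (1 / ((n : ℝ) + 1)) := by gcongr
    _ = _ := by
      rw [Real.mul_rpow (by positivity) (by positivity), Real.mul_rpow hKpos.le hI0,
        ← Real.rpow_natCast L n, ← Real.rpow_mul hL, mul_one_div]
end

section
/- Let C > 0, α ∈ (0,1), and let s, G : (0, ∞) → [0, ∞) be functions such that s is bounded on bounded neighborhoods of 0, G(r) = o(r²) as r → 0⁺, and s(r) ≤ C (s(2r) + r²)^α · G(r)^{1−α} for all sufficiently small r > 0. Then s(r) = o(r²) as r → 0⁺. -/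
open Filter
open scoped Topology

/-- A self-improving iteration lemma: if `s` is bounded near `0`, `G(r) = o(r²)`, and
`s(r) ≤ C (s(2r) + r²)^α G(r)^(1-α)` for small `r`, then `s(r) = o(r²)`. -/
theorem iteration_lemma (C α : ℝ) (hC : 0 < C) (hα : α ∈ Set.Ioo (0 : ℝ) 1)
    (s G : ℝ → ℝ) (hs_nonneg : ∀ r > (0 : ℝ), 0 ≤ s r) (hG_nonneg : ∀ r > (0 : ℝ), 0 ≤ G r)
    (hs_bdd : ∃ M : ℝ, ∃ δ > (0 : ℝ), ∀ r ∈ Set.Ioo (0 : ℝ) δ, s r ≤ M)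
    (hG : Filter.Tendsto (fun r => G r / r ^ 2) (nhdsWithin 0 (Set.Ioi 0)) (nhds 0))
    (hrec : ∃ r₀ > (0 : ℝ), ∀ r ∈ Set.Ioo (0 : ℝ) r₀,
      s r ≤ C * (s (2 * r) + r ^ 2) ^ α * G r ^ (1 - α)) :
    Filter.Tendsto (fun r => s r / r ^ 2) (nhdsWithin 0 (Set.Ioi 0)) (nhds 0) := by
  obtain ⟨hα0, hα1⟩ := hα
  obtain ⟨M, δ₁, hδ₁, hM⟩ := hs_bdd
  obtain ⟨r₀, hr₀, hrec⟩ := hrec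
  have h1α : 0 < 1 - α := by linarith
  rw [Metric.tendsto_nhdsWithin_nhds]
  intro e he
  obtain ⟨η, hη, hηe⟩ : ∃ η : ℝ, 0 < η ∧ 5 * η = e := ⟨e / 5, by positivity, by ring⟩
  obtain ⟨ε, hε, hε1, hε2⟩ : ∃ ε : ℝ, 0 < ε ∧ ε ≤ 1 / 32 ∧ ε ≤ η :=
    ⟨min (1 / 32) η, by positivity, min_le_left _ _, min_le_right _ _⟩
  obtain ⟨K, hK, hKC⟩ : ∃ K : ℝ, 0 < K ∧ ε ^ α * K ^ (1 - α) = C := by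
    refine ⟨(C / ε ^ α) ^ (1 - α)⁻¹, by positivity, ?_⟩
    rw [Real.rpow_inv_rpow (by positivity) h1α.ne']
    have : 0 < ε ^ α := by positivity
    field_simp
  rw [Metric.tendsto_nhdsWithin_nhds] at hG
  obtain ⟨δ₂, hδ₂, hG⟩ := hG (η / K) (by positivity)
  obtain ⟨δ, hδ, hd1, hd2, hd3⟩ : ∃ δ : ℝ, 0 < δ ∧ δ ≤ δ₁ ∧ δ ≤ δ₂ ∧ δ ≤ r₀ :=
    ⟨min δ₁ (min δ₂ r₀), by positivity, min_le_left _ _,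
      (min_le_right _ _).trans (min_le_left _ _), (min_le_right _ _).trans (min_le_right _ _)⟩
  have key : ∀ r, 0 < r → r < δ → s r ≤ s (2 * r) / 32 + 2 * η * r ^ 2 := by
    intro r hr hrd
    have hs2 := hs_nonneg (2 * r) (by linarith)
    have hGr := hG_nonneg r hr
    have hr2 : 0 < r ^ 2 := by positivity
    have h1 := hrec r ⟨hr, by linarith⟩
    have h2 := Real.geom_mean_le_arith_mean2_weighted hα0.le h1α.le
      (show 0 ≤ ε * (s (2 * r) + r ^ 2) by positivity) (show 0 ≤ K * G r by positivity) (by ring)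
    rw [Real.mul_rpow hε.le (by positivity), Real.mul_rpow hK.le hGr] at h2
    have h3 : C * (s (2 * r) + r ^ 2) ^ α * G r ^ (1 - α) =
      ε ^ α * (s (2 * r) + r ^ 2) ^ α * (K ^ (1 - α) * G r ^ (1 - α)) := by
      rw [← hKC]; ring
    have h4 := hG (x := r) hr (by rw [Real.dist_eq, sub_zero, abs_of_pos hr]; linarith)
    rw [Real.dist_eq, sub_zero, abs_of_nonneg (by positivity), div_lt_div_iff₀ hr2 hK] at h4
    have h5 : α * (ε * (s (2 * r) + r ^ 2)) ≤ ε * (s (2 * r) + r ^ 2) :=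
      mul_le_of_le_one_left (by positivity) hα1.le
    have h6 : (1 - α) * (K * G r) ≤ K * G r :=
      mul_le_of_le_one_left (by positivity) (by linarith)
    have h7 : ε * s (2 * r) ≤ 1 / 32 * s (2 * r) := mul_le_mul_of_nonneg_right hε1 hs2
    have h8 : ε * r ^ 2 ≤ η * r ^ 2 := mul_le_mul_of_nonneg_right hε2 hr2.le
    linarith
  have hM0 : 0 ≤ M := (hs_nonneg (δ / 2) (by positivity)).trans (hM _ ⟨by positivity, by linarith⟩)
  obtain ⟨A, hA, hAM⟩ : ∃ A : ℝ, 0 ≤ A ∧ A * (δ / 2) ^ 3 = M :=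
    ⟨M / (δ / 2) ^ 3, by positivity, by field_simp⟩
  have main : ∀ n : ℕ, ∀ r, 0 < r → r < δ → δ ≤ 2 ^ n * r → s r ≤ 4 * η * r ^ 2 + A * r ^ 3 := by
    intro n
    induction n with
    | zero => intro r h1 h2 h3; simp at h3; linarith
    | succ n ih =>
      intro r h1 h2 h3
      have p2 : 0 < η * r ^ 2 := by positivity
      have p3 : 0 ≤ A * r ^ 3 := by positivity
      by_cases h : 2 * r < δ
      · have h4 := ih (2 * r) (by linarith) h (by rw [pow_succ] at h3; linarith)
        have h5 := key r h1 h2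
        nlinarith
      · have h4 := hM r ⟨h1, by linarith⟩
        have h5 : A * (δ / 2) ^ 3 ≤ A * r ^ 3 := by
          gcongr
          linarith
        linarith
  refine ⟨min δ (η / (A + 1)), by positivity, ?_⟩
  intro r hr hrd
  have hr : 0 < r := hr
  rw [Real.dist_eq, sub_zero, abs_of_pos hr, lt_min_iff, lt_div_iff₀ (by positivity)] at hrd
  have hr2 : 0 < r ^ 2 := by positivity
  have hsr := hs_nonneg r hr
  rw [Real.dist_eq, sub_zero, abs_of_nonneg (by positivity), div_lt_iff₀ hr2]
  obtain ⟨n, hn⟩ := pow_unbounded_of_one_lt (δ / r) (one_lt_two)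
  rw [div_lt_iff₀ hr] at hn
  have h := main n r hr hrd.1 hn.le
  have h2 : r * A * r ^ 2 < η * r ^ 2 := mul_lt_mul_of_pos_right (by linarith) hr2
  rw [← hηe]
  nlinarith
end
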